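/- arXiv:1203.0686 — 2 statements merged into one kernel-verified Lean document; each statement's English description precedes it below -/
import Mathlib

section
/- If (X,d) is a nonempty compact metric space whose Hausdorff dimension is strictly larger than a positive integer k, then there exists a Lipschitz map f : X → ℝ^k whose image is exactly the k-dimensional cube [0,1]^k. -/
open MeasureTheory
open scoped ENNReal NNReal

/-!
Fix `k < p < s < dim X`. The `s`-dimensional Hausdorff content is a submeasure `m` on `X` with
`m (B(x, r)) ≤ (2r) ^ s`. Between two consecutive dyadic radii a ball contains an annulus across
which `m` grows by a factor close to `1`; greedily removing such padded balls splits `X`, at each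
scale, into well separated pieces at the cost of little mass. Giving each piece a subinterval of
length proportional to the mass of its padded ball, and iterating over the scales, yields in the
limit a map `q : [0,1] → X` with `|u - v| ≤ C d(q u, q v) ^ p`. On the other hand `k < p` allows
one to code the cube by `e : [0,1]^k → [0,1]` with `d(v, w) ^ p ≤ C |e v - e w|`. The inverse of
`q ∘ e` is Lipschitz on its domain, and it extends to `X` because the cube is an absolute Lipschitz
retract. Neither `q` nor `e` need be continuous.
-/

open Filter Function Metric Set Topology
open scoped unitInterval

section HausdorffContent

variable {X : Type*} [EMetricSpace X]

/-- The `s`-dimensional Hausdorff content: the largest outer measure bounded by `ediam A ^ s` on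
every set `A`. Unlike the Hausdorff measure, it is finite on bounded sets. -/
noncomputable def hausdorffContent (X : Type*) [EMetricSpace X] (s : ℝ) : OuterMeasure X :=
  OuterMeasure.mkMetric'.pre (fun A ↦ ediam A ^ s) ∞

theorem hausdorffContent_le_ediam_rpow (s : ℝ) (A : Set X) :
    hausdorffContent X s A ≤ ediam A ^ s :=
  OuterMeasure.mkMetric'.pre_le le_top

theorem pre_ediam_rpow_lt_top_of_isCompact {K : Set X} (hK : IsCompact K) {s : ℝ} (hs : 0 ≤ s)
    {ε : ℝ≥0∞} (hε₀ : 0 < ε) (hε : ε ≠ ∞) :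
    OuterMeasure.mkMetric'.pre (fun A ↦ ediam A ^ s) ε K < ∞ := by
  refine hK.induction_on (p := fun A ↦ OuterMeasure.mkMetric'.pre _ ε A < ∞) (by simp)
    (fun A B hAB ↦ (measure_mono hAB).trans_lt)
    (fun A B hA hB ↦ (measure_union_le A B).trans_lt (ENNReal.add_lt_top.2 ⟨hA, hB⟩))
    fun x _ ↦ ⟨eball x (ε / 2), mem_nhdsWithin_of_mem_nhds <|
      eball_mem_nhds x (ENNReal.half_pos hε₀.ne'), ?_⟩
  have hdiam : ediam (eball x (ε / 2)) ≤ ε :=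
    ediam_eball_le.trans_eq (ENNReal.mul_div_cancel two_ne_zero ENNReal.ofNat_ne_top)
  calc OuterMeasure.mkMetric'.pre (fun A ↦ ediam A ^ s) ε (eball x (ε / 2))
      ≤ ediam (eball x (ε / 2)) ^ s := OuterMeasure.mkMetric'.pre_le hdiam
    _ ≤ ε ^ s := by gcongr
    _ < ∞ := ENNReal.rpow_lt_top_of_nonneg hs hε

theorem hausdorffContent_univ_ne_zero [CompactSpace X] {s : ℝ≥0}
    (hs : (s : ℝ≥0∞) < dimH (univ : Set X)) : hausdorffContent X s univ ≠ 0 := by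
  borelize X
  have hmeasure : OuterMeasure.mkMetric' (fun A : Set X ↦ ediam A ^ (s : ℝ)) univ = ∞ :=
    (congrFun (OuterMeasure.coe_mkMetric fun r : ℝ≥0∞ ↦ r ^ (s : ℝ)) univ).trans
      (hausdorffMeasure_of_lt_dimH hs)
  obtain ⟨ε, hpos, hε₀, hε⟩ :=
    (((OuterMeasure.mkMetric'.tendsto_pre _ univ).eventually
      (lt_mem_nhds (hmeasure ▸ ENNReal.zero_lt_top))).and
      (Ioo_mem_nhdsGT ENNReal.zero_lt_top)).exists
  set μ := OuterMeasure.mkMetric'.pre (fun A : Set X ↦ ediam A ^ (s : ℝ)) ε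
  have hfin : μ univ ≠ ∞ := (pre_ediam_rpow_lt_top_of_isCompact isCompact_univ s.2 hε₀ hε.ne).ne
  -- Sets of diameter more than `ε` have `ediam A ^ s ≥ ε ^ s`, so rescaling `μ` to have total mass
  -- at most `ε ^ s` removes the restriction to small sets.
  set c : ℝ≥0∞ := min 1 (ε ^ (s : ℝ) / μ univ)
  have hc : c ≠ 0 :=
    (lt_min one_pos (ENNReal.div_pos (ENNReal.rpow_pos hε₀ hε.ne).ne' hfin)).ne'
  have hle : c • μ ≤ hausdorffContent X s := OuterMeasure.mkMetric'.le_pre.2 fun A _ ↦ by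
    change c * μ A ≤ _
    rcases le_total (ediam A) ε with hA | hA
    · calc c * μ A ≤ 1 * μ A := by gcongr; exact min_le_left _ _
        _ ≤ ediam A ^ (s : ℝ) := by rw [one_mul]; exact OuterMeasure.mkMetric'.pre_le hA
    · calc c * μ A ≤ μ univ * (ε ^ (s : ℝ) / μ univ) := by
            rw [mul_comm]
            gcongr
            exacts [subset_univ A, min_le_right _ _]
        _ ≤ ε ^ (s : ℝ) := ENNReal.mul_div_le
        _ ≤ ediam A ^ (s : ℝ) := by gcongr
  exact ((ENNReal.mul_pos hc hpos.ne').trans_le (hle univ)).ne'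

end HausdorffContent

/-- A finite submeasure: a real-valued monotone and finitely subadditive function of all subsets. -/
structure Submeasure (X : Type*) where
  toFun : Set X → ℝ
  empty : toFun ∅ = 0
  mono : ∀ {A B}, A ⊆ B → toFun A ≤ toFun B
  union_le : ∀ A B, toFun (A ∪ B) ≤ toFun A + toFun B

namespace Submeasure

variable {X : Type*}

instance : CoeFun (Submeasure X) fun _ ↦ Set X → ℝ := ⟨toFun⟩

/-- The submeasure with the same values as a finite outer measure. -/
noncomputable def ofOuterMeasure (μ : OuterMeasure X) (hμ : μ univ ≠ ∞) : Submeasure X where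
  toFun A := (μ A).toReal
  empty := by simp
  mono {A B} hAB := ENNReal.toReal_mono (ne_top_of_le_ne_top hμ (measure_mono (subset_univ B)))
    (measure_mono hAB)
  union_le A B := by
    have hfin (A : Set X) : μ A ≠ ∞ := ne_top_of_le_ne_top hμ (measure_mono (subset_univ A))
    rw [← ENNReal.toReal_add (hfin A) (hfin B)]
    exact ENNReal.toReal_mono (ENNReal.add_ne_top.2 ⟨hfin A, hfin B⟩) (measure_union_le A B)

theorem ofOuterMeasure_apply (μ : OuterMeasure X) (hμ : μ univ ≠ ∞) (A : Set X) :
    ofOuterMeasure μ hμ A = (μ A).toReal := rfl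

variable (m : Submeasure X)

theorem nonneg (A : Set X) : 0 ≤ m A := m.empty.symm.trans_le (m.mono (empty_subset A))

theorem nonempty_of_pos {A : Set X} (hA : 0 < m A) : A.Nonempty := by
  rw [nonempty_iff_ne_empty]
  rintro rfl
  exact hA.ne' m.empty

theorem biUnion_nonpos {ι : Type*} {t : Set ι} (ht : t.Finite) {A : ι → Set X}
    (hA : ∀ i ∈ t, m (A i) ≤ 0) : m (⋃ i ∈ t, A i) ≤ 0 := by
  induction t, ht using Set.Finite.induction_on with
  | empty => simp [m.empty]
  | @insert i t _ _ ih =>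
    rw [biUnion_insert]
    linarith [m.union_le (A i) (⋃ j ∈ t, A j), hA i (mem_insert i t),
      ih fun j hj ↦ hA j (mem_insert_of_mem i hj)]

end Submeasure

theorem exists_submeasure_closedBall_le {X : Type*} [MetricSpace X] [CompactSpace X] {s : ℝ≥0}
    (hs : (s : ℝ≥0∞) < dimH (univ : Set X)) :
    ∃ m : Submeasure X, 0 < m univ ∧ ∀ x r, 0 ≤ r → m (closedBall x r) ≤ (2 * r) ^ (s : ℝ) := by
  have hdiam : ediam (univ : Set X) ≠ ∞ := isCompact_univ.isBounded.ediam_ne_top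
  have hfin : hausdorffContent X s univ ≠ ∞ :=
    ((hausdorffContent_le_ediam_rpow s univ).trans_lt <|
      ENNReal.rpow_lt_top_of_nonneg s.2 hdiam).ne
  refine ⟨.ofOuterMeasure _ hfin, ?_, fun x r hr ↦ ?_⟩ <;> rw [Submeasure.ofOuterMeasure_apply]
  · exact ENNReal.toReal_pos (hausdorffContent_univ_ne_zero hs) hfin
  refine ENNReal.toReal_le_of_le_ofReal (by positivity) ?_
  calc hausdorffContent X s (closedBall x r)
      ≤ ediam (closedBall x r) ^ (s : ℝ) := hausdorffContent_le_ediam_rpow _ _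
    _ ≤ (2 * ENNReal.ofReal r) ^ (s : ℝ) := by
      rw [← closedEBall_ofReal hr]
      gcongr
      exact ediam_closedEBall_le
    _ = ENNReal.ofReal ((2 * r) ^ (s : ℝ)) := by
      rw [← ENNReal.ofReal_rpow_of_nonneg (by positivity) s.coe_nonneg,
        ENNReal.ofReal_mul zero_le_two, ENNReal.ofReal_ofNat]

section PaddedBalls

variable {X : Type*} [PseudoMetricSpace X] (m : Submeasure X) {Z : Set X}

theorem exists_pos_closedBall_inter (hZ : TotallyBounded Z) (hmZ : 0 < m Z) {r : ℝ} (hr : 0 < r) :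
    ∃ x ∈ Z, 0 < m (closedBall x r ∩ Z) := by
  by_contra! hnull
  obtain ⟨t, htZ, ht, hcover⟩ := finite_approx_of_totallyBounded hZ r hr
  have hZt : Z ⊆ ⋃ x ∈ t, closedBall x r ∩ Z := fun z hz ↦ by
    obtain ⟨x, hx, hzx⟩ := mem_iUnion₂.1 (hcover hz)
    exact mem_biUnion hx ⟨ball_subset_closedBall hzx, hz⟩
  linarith [m.mono hZt, m.biUnion_nonpos ht fun x hx ↦ hnull x (htZ hx)]

theorem exists_forall_closedBall_inter_le_two_mul (hZ : TotallyBounded Z) (hmZ : 0 < m Z)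
    {r : ℝ} (hr : 0 < r) :
    ∃ x ∈ Z, 0 < m (closedBall x r ∩ Z) ∧
      ∀ y ∈ Z, m (closedBall y r ∩ Z) ≤ 2 * m (closedBall x r ∩ Z) := by
  set S : Set ℝ := (fun y ↦ m (closedBall y r ∩ Z)) '' Z
  have hS : BddAbove S := ⟨m Z, forall_mem_image.2 fun y _ ↦ m.mono inter_subset_right⟩
  obtain ⟨x₀, hx₀, hpos⟩ := exists_pos_closedBall_inter m hZ hmZ hr
  have hsup : 0 < sSup S := hpos.trans_le (le_csSup hS (mem_image_of_mem _ hx₀))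
  obtain ⟨_, ⟨x, hx, rfl⟩, hlt⟩ :=
    exists_lt_of_lt_csSup (s := S) ⟨_, mem_image_of_mem _ hx₀⟩ (half_lt_self hsup)
  dsimp only at hlt
  exact ⟨x, hx, by linarith, fun y hy ↦ by linarith [le_csSup hS (mem_image_of_mem _ hy)]⟩

theorem exists_pow_mul_le_pow_mul {b : ℕ → ℝ} (hb : ∀ j, 0 < b j) {n : ℕ} (hn : n ≠ 0) :
    ∃ j < n, b (j + 1) ^ n * b 0 ≤ b j ^ n * b n := by
  by_contra! hlt
  have hprod : ∏ j ∈ Finset.range n, b j ^ n * b n <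
      ∏ j ∈ Finset.range n, b (j + 1) ^ n * b 0 :=
    Finset.prod_lt_prod_of_nonempty (fun j _ ↦ by have := hb j; have := hb n; positivity)
      (fun j hj ↦ hlt j (Finset.mem_range.1 hj)) (Finset.nonempty_range_iff.2 hn)
  refine hprod.ne ?_
  simp only [Finset.prod_mul_distrib, Finset.prod_pow, Finset.prod_const, Finset.card_range,
    ← mul_pow, ← Finset.prod_range_succ, ← Finset.prod_range_succ']

theorem exists_padded_closedBall (hZ : TotallyBounded Z) (hmZ : 0 < m Z) {r w M : ℝ} (hr : 0 < r)
    (hw : 0 ≤ w) {n : ℕ} (hn : n ≠ 0) (hM : ∀ y ∈ Z, m (closedBall y (r + n * w) ∩ Z) ≤ M) :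
    ∃ x ∈ Z, ∃ t, r ≤ t ∧ t + w ≤ r + n * w ∧ 0 < m (closedBall x t ∩ Z) ∧
      ∃ M', (∀ y ∈ Z, m (closedBall y r ∩ Z) ≤ M') ∧
        m (closedBall x (t + w) ∩ Z) ^ n * M' ≤ 2 * (m (closedBall x t ∩ Z) ^ n * M) := by
  obtain ⟨x, hxZ, hpos, hmax⟩ := exists_forall_closedBall_inter_le_two_mul m hZ hmZ hr
  set b : ℕ → ℝ := fun j ↦ m (closedBall x (r + j * w) ∩ Z) with hb
  have hb₀ : b 0 = m (closedBall x r ∩ Z) := by simp [hb]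
  have hbpos (j : ℕ) : 0 < b j := hpos.trans_le <| m.mono <| inter_subset_inter_left _ <|
    closedBall_subset_closedBall <| le_add_of_nonneg_right (by positivity)
  obtain ⟨j, hj, hgrowth⟩ := exists_pow_mul_le_pow_mul hbpos hn
  have hsucc : r + j * w + w = r + (j + 1 : ℕ) * w := by push_cast; ring
  refine ⟨x, hxZ, r + j * w, le_add_of_nonneg_right (by positivity), ?_, hbpos j,
    2 * b 0, fun y hy ↦ hb₀ ▸ hmax y hy, ?_⟩
  · rw [hsucc]
    gcongr
    exact hj
  · rw [hsucc]
    calc b (j + 1) ^ n * (2 * b 0) = 2 * (b (j + 1) ^ n * b 0) := by ring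
      _ ≤ 2 * (b j ^ n * b n) := by gcongr
      _ ≤ 2 * (b j ^ n * M) := by
        have := (hbpos j).le
        gcongr
        exact hM x hxZ

end PaddedBalls

/-- The interval `[0, T)` can be mapped into `Y`, possibly discontinuously, in such a way that
the inverse is `p`-Hölder with constant `c` up to an additive error `δ`. The map is defined on all
of `ℝ`, but only its restriction to `[0, T)` is relevant. -/
def CarriesInterval {X : Type*} [PseudoMetricSpace X] (c p δ T : ℝ) (Y : Set X) : Prop :=
  ∃ q : ℝ → X, MapsTo q (Ico 0 T) Y ∧
    ∀ u ∈ Ico 0 T, ∀ v ∈ Ico 0 T, dist u v ≤ c * dist (q u) (q v) ^ p + δ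

namespace CarriesInterval

variable {X : Type*} [PseudoMetricSpace X] {c p δ S T U : ℝ} {A B Y : Set X}

theorem of_nonpos [Nonempty X] (hT : T ≤ 0) : CarriesInterval c p δ T Y :=
  ⟨fun _ ↦ Classical.arbitrary X, by simp [Ico_eq_empty_of_le hT, MapsTo]⟩

theorem of_le (hY : Y.Nonempty) (hc : 0 ≤ c) (hT : T ≤ δ) : CarriesInterval c p δ T Y := by
  obtain ⟨y, hy⟩ := hY
  refine ⟨fun _ ↦ y, fun _ _ ↦ hy, fun u hu v hv ↦ ?_⟩
  have huv := Real.dist_le_of_mem_Icc (Ico_subset_Icc_self hu) (Ico_subset_Icc_self hv)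
  have : 0 ≤ c * dist y y ^ p := by positivity
  linarith

theorem mono (hAB : A ⊆ B) (hA : CarriesInterval c p δ T A) : CarriesInterval c p δ T B :=
  let ⟨q, hq, hdist⟩ := hA
  ⟨q, hq.mono_right hAB, hdist⟩

theorem union (hA : CarriesInterval c p δ S A) (hB : CarriesInterval c p δ T B) (hδ : 0 ≤ δ)
    (hU : U ≤ S + T) (hsep : ∀ x ∈ A, ∀ y ∈ B, U ≤ c * dist x y ^ p) :
    CarriesInterval c p δ U (A ∪ B) := by
  obtain ⟨f, hfA, hf⟩ := hA
  obtain ⟨g, hgB, hg⟩ := hB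
  have hshift {u : ℝ} (hu : u ∈ Ico 0 U) (huS : ¬u < S) : u - S ∈ Ico 0 T :=
    ⟨by linarith, by linarith [hu.2]⟩
  have hlen {u v : ℝ} (hu : u ∈ Ico 0 U) (hv : v ∈ Ico 0 U) : dist u v ≤ U := by
    simpa using Real.dist_le_of_mem_Icc (Ico_subset_Icc_self hu) (Ico_subset_Icc_self hv)
  refine ⟨fun u ↦ if u < S then f u else g (u - S), fun u hu ↦ ?_, fun u hu v hv ↦ ?_⟩
  · by_cases huS : u < S
    · simpa only [huS, if_true] using .inl (hfA ⟨hu.1, huS⟩)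
    · simpa only [huS, if_false] using .inr (hgB (hshift hu huS))
  · by_cases huS : u < S <;> by_cases hvS : v < S <;> simp only [huS, hvS, if_true, if_false]
    · exact hf u ⟨hu.1, huS⟩ v ⟨hv.1, hvS⟩
    · linarith [hlen hu hv, hsep _ (hfA ⟨hu.1, huS⟩) _ (hgB (hshift hv hvS))]
    · rw [dist_comm (g _)]
      linarith [hlen hu hv, hsep _ (hfA ⟨hv.1, hvS⟩) _ (hgB (hshift hu huS))]
    · simpa only [dist_sub_right] using hg _ (hshift hu huS) _ (hshift hv hvS)

end CarriesInterval

section Exhaustion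

variable {X : Type*} [PseudoMetricSpace X]

theorem exists_ssubset_cover_sdiff_closedBall {F : Finset X} {Z : Set X} {r : ℝ}
    (hZ : Z ⊆ ⋃ c ∈ F, ball c r) {x : X} (hx : x ∈ Z) :
    ∃ F' ⊂ F, Z \ closedBall x (2 * r) ⊆ ⋃ c ∈ F', ball c r := by
  classical
  obtain ⟨c₀, hc₀, hxc₀⟩ := mem_iUnion₂.1 (hZ hx)
  refine ⟨{c ∈ F | x ∉ ball c r}, Finset.filter_ssubset.2 ⟨c₀, hc₀, not_not.2 hxc₀⟩, ?_⟩
  rintro z ⟨hzZ, hzx⟩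
  obtain ⟨c, hc, hzc⟩ := mem_iUnion₂.1 (hZ hzZ)
  refine mem_iUnion₂.2 ⟨c, Finset.mem_filter.2 ⟨hc, fun hxc ↦ hzx ?_⟩, hzc⟩
  rw [mem_ball] at hzc hxc
  rw [mem_closedBall]
  linarith [dist_triangle_right z x c]

theorem carriesInterval_of_forall_exists_closedBall [Nonempty X] (m : Submeasure X)
    {c p δ κ ρ r₀ : ℝ} {Y : Set X} (hc : 0 ≤ c) (hp : 0 ≤ p) (hδ : 0 ≤ δ) (hκ : 0 ≤ κ)
    (hρ : 0 ≤ ρ) (hr₀ : 0 < r₀) (hY : TotallyBounded Y) (hYρ : κ * m Y ≤ c * ρ ^ p)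
    (hball : ∀ Z ⊆ Y, 0 < m Z → ∃ x ∈ Z, ∃ r ≥ r₀,
      CarriesInterval c p δ (κ * m (closedBall x (r + ρ) ∩ Z)) (closedBall x r ∩ Z)) :
    CarriesInterval c p δ (κ * m Y) Y := by
  obtain ⟨t, -, ht, hYt⟩ := finite_approx_of_totallyBounded hY (r₀ / 2) (by positivity)
  suffices H : ∀ (F : Finset X), ∀ Z ⊆ Y, Z ⊆ ⋃ c ∈ F, ball c (r₀ / 2) →
      CarriesInterval c p δ (κ * m Z) Z from H ht.toFinset Y subset_rfl (by simpa using hYt)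
  intro F
  induction F using Finset.strongInduction with
  | H F ih =>
  intro Z hZY hZF
  rcases (m.nonneg Z).eq_or_lt with hmZ | hmZ
  · exact .of_nonpos (by simp [← hmZ])
  obtain ⟨x, hxZ, r, hr, hcarry⟩ := hball Z hZY hmZ
  obtain ⟨F', hF', hcover⟩ := exists_ssubset_cover_sdiff_closedBall hZF hxZ
  set Z' := Z \ closedBall x (r + ρ)
  have hZ'Z : Z' ⊆ Z := sdiff_subset
  have hcarry' : CarriesInterval c p δ (κ * m Z') Z' :=
    ih F' hF' Z' (hZ'Z.trans hZY) <| (sdiff_subset_sdiff_right <|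
      closedBall_subset_closedBall (by linarith)).trans hcover
  refine (hcarry.union hcarry' hδ ?_ fun y hy z hz ↦ ?_).mono (union_subset inter_subset_right hZ'Z)
  · rw [← mul_add]
    gcongr
    calc m Z = m (closedBall x (r + ρ) ∩ Z ∪ Z') := by rw [inter_comm, inter_union_sdiff]
      _ ≤ m (closedBall x (r + ρ) ∩ Z) + m Z' := m.union_le _ _
  · have hyz : ρ ≤ dist y z := by
      have hy' := mem_closedBall.1 hy.1
      have hz' := not_le.1 (mt mem_closedBall.2 hz.2)
      linarith [dist_triangle_left z x y]
    calc κ * m Z ≤ κ * m Y := by gcongr; exact m.mono hZY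
      _ ≤ c * ρ ^ p := hYρ
      _ ≤ c * dist y z ^ p := by gcongr

end Exhaustion

section MultiScale

theorem mul_le_mul_rpow_of_pow_mul_le {κ b a M D p s : ℝ} {n : ℕ} (hκ : 0 ≤ κ) (hb : 0 ≤ b)
    (ha : 0 ≤ a) (hD : 0 < D) (hD₁ : D ≤ 1) (hexp : p * (n + 1) + 1 ≤ s * n) (hbM : b ≤ M)
    (hbD : b ≤ D ^ s) (hgrowth : κ ^ (n + 1) * (M * D) ≤ a ^ (n + 1)) : κ * b ≤ a * D ^ p := by
  refine le_of_pow_le_pow_left₀ n.succ_ne_zero (by positivity) ?_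
  calc (κ * b) ^ (n + 1) = κ ^ (n + 1) * (b * b ^ n) := by ring
    _ ≤ κ ^ (n + 1) * (M * (D ^ s) ^ n) := by have := hb.trans hbM; gcongr
    _ = κ ^ (n + 1) * (M * D) * D ^ (s * n - 1) := by
      rw [← Real.rpow_mul_natCast hD.le, Real.rpow_sub_one hD.ne']
      field_simp
    _ ≤ a ^ (n + 1) * D ^ (p * (n + 1)) := by
      have := Real.rpow_le_rpow_of_exponent_ge hD hD₁ (le_sub_iff_add_le.2 hexp)
      gcongr
    _ = (a * D ^ p) ^ (n + 1) := by
      rw [mul_pow, ← Real.rpow_mul_natCast hD.le, Nat.cast_succ]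

variable {X : Type*} [PseudoMetricSpace X]

/-- The invariant of the multi-scale construction, for a piece `Y` at scale `R` which is to carry
an interval of length `κ * m Y`. The growth condition bounds the density `κ` in terms of the
largest mass `M` of a ball of radius `R`, and survives halving the scale. The length condition says
that points at distance comparable to `R` satisfy the Hölder bound. -/
structure IsAdmissible (m : Submeasure X) (a p : ℝ) (n : ℕ) (R κ : ℝ) (Y : Set X) : Prop where
  totallyBounded : TotallyBounded Y
  pos : 0 < m Y
  density_nonneg : 0 ≤ κ
  exists_growth : ∃ M, (∀ y ∈ Y, m (closedBall y R ∩ Y) ≤ M) ∧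
    κ ^ (n + 1) * (M * (2 * R)) ≤ a ^ (n + 1)
  length_le : κ * m Y ≤ a * (4 * R) ^ p

variable {m : Submeasure X} {a p s : ℝ} {n : ℕ}

namespace IsAdmissible

variable {R κ : ℝ} {Y Z : Set X}

theorem exists_isAdmissible_half (h : IsAdmissible m a p n R κ Y) (ha : 0 ≤ a)
    (hexp : p * (n + 1) + 1 ≤ s * n) (hm : ∀ x r, 0 ≤ r → m (closedBall x r) ≤ (2 * r) ^ s)
    (hR : 0 < R) (hR₁ : 2 * R ≤ 1) (hZY : Z ⊆ Y) (hmZ : 0 < m Z) :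
    ∃ x ∈ Z, ∃ t ≥ R / 2, ∃ κ',
      κ' * m (closedBall x t ∩ Z) = κ * m (closedBall x (t + R / (2 * (n + 1))) ∩ Z) ∧
        IsAdmissible m a p n (R / 2) κ' (closedBall x t ∩ Z) := by
  obtain ⟨M, hM, hgrowth⟩ := h.exists_growth
  have hκ := h.density_nonneg
  set ρ := R / (2 * (n + 1)) with hρ
  have hnρ : R / 2 + (n + 1 : ℕ) * ρ = R := by rw [hρ]; push_cast; field_simp; norm_num
  have hMZ (y : X) (hy : y ∈ Z) : m (closedBall y R ∩ Z) ≤ M :=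
    (m.mono (inter_subset_inter_right _ hZY)).trans (hM y (hZY hy))
  obtain ⟨x, hxZ, t, ht, htR, hmW, M', hM', hpad⟩ := exists_padded_closedBall m
    (h.totallyBounded.subset hZY) hmZ (half_pos hR) (by positivity) n.succ_ne_zero (hnρ.symm ▸ hMZ)
  rw [hnρ] at htR
  set W := closedBall x t ∩ Z
  set B := closedBall x (t + ρ) ∩ Z
  have hBR : B ⊆ closedBall x R ∩ Z := inter_subset_inter_left _ (closedBall_subset_closedBall htR)
  have hκW : κ * m B / m W * m W = κ * m B := div_mul_cancel₀ _ hmW.ne'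
  refine ⟨x, hxZ, t, ht, κ * m B / m W, hκW,
    h.totallyBounded.subset (inter_subset_right.trans hZY), hmW,
    div_nonneg (mul_nonneg hκ (m.nonneg B)) hmW.le, ⟨M', fun y hy ↦ ?_, ?_⟩, ?_⟩
  · exact (m.mono (inter_subset_inter_right _ inter_subset_right)).trans (hM' y hy.2)
  · calc (κ * m B / m W) ^ (n + 1) * (M' * (2 * (R / 2)))
        = κ ^ (n + 1) * R / m W ^ (n + 1) * (m B ^ (n + 1) * M') := by
          rw [div_pow, mul_pow]
          ring
      _ ≤ κ ^ (n + 1) * R / m W ^ (n + 1) * (2 * (m W ^ (n + 1) * M)) := by gcongr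
      _ = κ ^ (n + 1) * (M * (2 * R)) := by field_simp
      _ ≤ a ^ (n + 1) := hgrowth
  · calc κ * m B / m W * m W = κ * m B := hκW
      _ ≤ a * (2 * R) ^ p :=
        mul_le_mul_rpow_of_pow_mul_le hκ (m.nonneg B) ha (by positivity) hR₁ hexp
          ((m.mono hBR).trans (hMZ x hxZ))
          ((m.mono (hBR.trans inter_subset_left)).trans (hm x R hR.le)) hgrowth
      _ = a * (4 * (R / 2)) ^ p := by ring_nf

theorem carriesInterval [Nonempty X] {δ : ℝ} (h : IsAdmissible m a p n R κ Y) (ha : 0 ≤ a)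
    (hp : 0 ≤ p) (hexp : p * (n + 1) + 1 ≤ s * n) (hδ : 0 ≤ δ)
    (hm : ∀ x r, 0 ≤ r → m (closedBall x r) ≤ (2 * r) ^ s) (hR : 0 < R) (hR₁ : 2 * R ≤ 1) {N : ℕ}
    (hN : a * (4 * (R / 2 ^ N)) ^ p ≤ δ) :
    CarriesInterval (a * (8 * (n + 1)) ^ p) p δ (κ * m Y) Y := by
  induction N generalizing R κ Y with
  | zero =>
    exact .of_le (m.nonempty_of_pos h.pos) (by positivity) (h.length_le.trans (by simpa using hN))
  | succ N ih =>
  have hlength : κ * m Y ≤ a * (8 * (n + 1)) ^ p * (R / (2 * (n + 1))) ^ p := by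
    rw [mul_assoc, ← Real.mul_rpow (by positivity) (by positivity)]
    convert h.length_le using 3
    field_simp
    norm_num
  refine carriesInterval_of_forall_exists_closedBall m (by positivity) hp hδ h.density_nonneg
    (by positivity) (half_pos hR) h.totallyBounded hlength fun Z hZY hmZ ↦ ?_
  obtain ⟨x, hxZ, t, ht, κ', hκ', hW⟩ := h.exists_isAdmissible_half ha hexp hm hR hR₁ hZY hmZ
  exact ⟨x, hxZ, t, ht, hκ' ▸ ih hW (half_pos hR) (by linarith) (by rwa [div_div, ← pow_succ'])⟩

end IsAdmissible

theorem exists_isAdmissible_univ [CompactSpace X] (hmX : 0 < m univ) (hp : 0 ≤ p) (n : ℕ) {T : ℝ}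
    (hT : 0 ≤ T) :
    ∃ a ≥ 0, ∃ κ, κ * m univ = T ∧ IsAdmissible m a p n (1 / 2) κ univ := by
  set κ := T / m univ
  have hκ : 0 ≤ κ := by positivity
  have hκX : κ * m univ = T := div_mul_cancel₀ _ hmX.ne'
  set a := 1 + T + κ ^ (n + 1) * m univ
  have hgrowth : 0 ≤ κ ^ (n + 1) * m univ := by positivity
  refine ⟨a, by positivity, κ, hκX, isCompact_univ.totallyBounded, hmX, hκ,
    ⟨m univ, fun y _ ↦ m.mono (subset_univ _), ?_⟩, ?_⟩
  · calc κ ^ (n + 1) * (m univ * (2 * (1 / 2))) = κ ^ (n + 1) * m univ := by ring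
      _ ≤ a := by linarith
      _ ≤ a ^ (n + 1) := le_self_pow₀ (by linarith) n.succ_ne_zero
  · calc κ * m univ ≤ a * 1 := by linarith
      _ ≤ a * (4 * (1 / 2)) ^ p := by
        gcongr
        exact Real.one_le_rpow (by norm_num) hp

theorem exists_forall_carriesInterval_univ {X : Type*} [MetricSpace X] [CompactSpace X]
    (hp : 0 < p) (hdim : ENNReal.ofReal p < dimH (univ : Set X)) {T : ℝ} (hT : 0 ≤ T) :
    ∃ c ≥ 0, ∀ δ > 0, CarriesInterval c p δ T (univ : Set X) := by
  obtain ⟨s, hps, hs⟩ := ENNReal.lt_iff_exists_nnreal_btwn.1 hdim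
  obtain ⟨m, hmX, hm⟩ := exists_submeasure_closedBall_le hs
  have : Nonempty X := (m.nonempty_of_pos hmX).to_type
  have hps : p < s := (ENNReal.ofReal_lt_coe_iff hp.le).1 hps
  obtain ⟨n, hn⟩ := exists_nat_gt ((p + 1) / (s - p))
  have hexp : p * (n + 1) + 1 ≤ s * n := by
    have := (div_lt_iff₀ (sub_pos.2 hps)).1 hn
    linarith
  obtain ⟨a, ha, κ, hκX, hadm⟩ := exists_isAdmissible_univ hmX hp.le n hT
  have hscale : Tendsto (fun N : ℕ ↦ a * (4 * (1 / 2 / 2 ^ N)) ^ p) atTop (𝓝 0) := by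
    have hpow : Tendsto (fun N : ℕ ↦ (1 / 2 : ℝ) / 2 ^ N) atTop (𝓝 0) :=
      tendsto_const_nhds.div_atTop (tendsto_pow_atTop_atTop_of_one_lt one_lt_two)
    simpa [Real.zero_rpow hp.ne'] using
      ((hpow.const_mul 4).rpow_const (.inr hp.le)).const_mul a
  refine ⟨a * (8 * (n + 1)) ^ p, by positivity, fun δ hδ ↦ ?_⟩
  obtain ⟨N, hN⟩ := (hscale.eventually_le_const hδ).exists
  exact hκX ▸ hadm.carriesInterval ha hp.le hexp hδ.le hm one_half_pos (by norm_num) hN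

end MultiScale

theorem exists_forall_le_of_forall_exists_le_add {α Y : Type*} [TopologicalSpace Y] [CompactSpace Y]
    {F : α → α → ℝ} {G : Y → Y → ℝ} (hG : Continuous (uncurry G))
    (h : ∀ δ > 0, ∃ f : α → Y, ∀ x y, F x y ≤ G (f x) (f y) + δ) :
    ∃ f : α → Y, ∀ x y, F x y ≤ G (f x) (f y) := by
  choose f hf using fun n : ℕ ↦ h (1 / (n + 1)) Nat.one_div_pos_of_nat
  obtain ⟨g, hg⟩ := exists_clusterPt_of_compactSpace (map f atTop)
  refine ⟨g, fun x y ↦ le_of_forall_pos_le_add fun δ hδ ↦ ?_⟩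
  have hcont : Continuous fun g : α → Y ↦ G (g x) (g y) :=
    hG.comp₂ (continuous_apply x) (continuous_apply y)
  have hclosed : IsClosed {g : α → Y | F x y ≤ G (g x) (g y) + δ} :=
    isClosed_le continuous_const (hcont.add_const δ)
  refine hclosed.mem_of_mapClusterPt hg ?_
  filter_upwards [tendsto_one_div_add_atTop_nhds_zero_nat.eventually_le_const hδ] with n hn
  exact (hf n x y).trans (by gcongr)

theorem exists_dist_le_mul_dist_rpow {X : Type*} [MetricSpace X] [CompactSpace X] {p : ℝ}
    (hp : 0 < p) (hdim : ENNReal.ofReal p < dimH (univ : Set X)) :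
    ∃ c ≥ 0, ∃ q : I → X, ∀ u v, dist u v ≤ c * dist (q u) (q v) ^ p := by
  obtain ⟨c, hc, hcarries⟩ := exists_forall_carriesInterval_univ hp hdim zero_le_two
  refine ⟨c, hc, exists_forall_le_of_forall_exists_le_add (F := fun u v : I ↦ dist u v)
    (G := fun x y : X ↦ c * dist x y ^ p)
    ((continuous_dist.rpow_const fun _ ↦ .inr hp.le).const_mul c) fun δ hδ ↦ ?_⟩
  obtain ⟨q, -, hq⟩ := hcarries δ hδ
  have hI (u : I) : (u : ℝ) ∈ Ico 0 2 := ⟨u.2.1, u.2.2.trans_lt one_lt_two⟩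
  exact ⟨fun u ↦ q u, fun u v ↦ hq u (hI u) v (hI v)⟩

section Coding

theorem digit_div_add_mem_unitInterval {b : ℕ} (i : Fin b) {β t : ℝ} (hβ : 0 ≤ β)
    (hβb : β ≤ (b : ℝ)⁻¹) (ht : t ∈ I) : (i : ℝ) / b + β * t ∈ I := by
  have hb : (0 : ℝ) < b := Nat.cast_pos.2 (Nat.zero_lt_of_lt i.2)
  have hi : (i : ℝ) + 1 ≤ b := mod_cast i.2
  refine ⟨add_nonneg (by positivity) (mul_nonneg hβ ht.1), ?_⟩
  calc (i : ℝ) / b + β * t ≤ i / b + (b : ℝ)⁻¹ * 1 := by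
        have := ht.1
        gcongr
        exact ht.2
    _ = (i + 1) / b := by ring
    _ ≤ 1 := (div_le_one hb).2 hi

theorem inv_sub_le_dist_digit_div_add {b : ℕ} {i j : Fin b} (hij : i ≠ j) {β t u : ℝ} (hβ : 0 ≤ β)
    (ht : t ∈ I) (hu : u ∈ I) :
    (b : ℝ)⁻¹ - β ≤ dist ((i : ℝ) / b + β * t) (j / b + β * u) := by
  have hdigit : (b : ℝ)⁻¹ ≤ dist ((i : ℝ) / b) (j / b) := by
    have hone : 1 ≤ |(i : ℝ) - j| := Nat.pairwise_one_le_dist (Fin.val_ne_of_ne hij)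
    rw [Real.dist_eq, ← sub_div, abs_div, Nat.abs_cast, inv_eq_one_div]
    gcongr
  have htail : |β * (t - u)| ≤ β := by
    rw [abs_mul, abs_of_nonneg hβ]
    exact mul_le_of_le_one_right hβ (by simpa [Real.dist_eq] using Real.dist_le_of_mem_Icc ht hu)
  calc (b : ℝ)⁻¹ - β ≤ |(i : ℝ) / b - j / b| - |β * (t - u)| := sub_le_sub hdigit htail
    _ ≤ |((i : ℝ) / b - j / b) + β * (t - u)| := by
      simpa using abs_sub_abs_le_abs_sub ((i : ℝ) / b - j / b) (-(β * (t - u)))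
    _ = dist ((i : ℝ) / b + β * t) (j / b + β * u) := by
      rw [Real.dist_eq]
      ring_nf

variable {Q D : Type*} [PseudoMetricSpace Q] [Fintype D] {digit : Q → D} {shift : Q → Q} {p r : ℝ}

theorem exists_forall_dist_rpow_le_add_pow (hp : 0 ≤ p) (hr : 0 ≤ r)
    (hrD : r ^ p < (Fintype.card D : ℝ)⁻¹) (hdist : ∀ v w : Q, dist v w ≤ 1)
    (hexpand : ∀ v w, digit v = digit w → dist v w ≤ r * dist (shift v) (shift w)) (n : ℕ) :
    ∃ e : Q → I, ∀ v w,
      dist v w ^ p ≤ ((Fintype.card D : ℝ)⁻¹ - r ^ p)⁻¹ * dist (e v) (e w) + (r ^ p) ^ n := by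
  have hgap := sub_pos.2 hrD
  have hdistp (v w : Q) : dist v w ^ p ≤ 1 := Real.rpow_le_one dist_nonneg (hdist v w) hp
  have hβ : 0 ≤ r ^ p := by positivity
  induction n with
  | zero => exact ⟨fun _ ↦ 0, by simpa using hdistp⟩
  | succ n ih =>
  obtain ⟨e, he⟩ := ih
  set index : Q → Fin (Fintype.card D) := fun v ↦ Fintype.equivFin D (digit v)
  refine ⟨fun v ↦ ⟨_, digit_div_add_mem_unitInterval (index v) hβ hrD.le (e (shift v)).2⟩,
    fun v w ↦ ?_⟩
  rw [Subtype.dist_eq]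
  by_cases hvw : digit v = digit w
  · have hindex : index v = index w := congrArg (Fintype.equivFin D) hvw
    calc dist v w ^ p ≤ (r * dist (shift v) (shift w)) ^ p := by gcongr; exact hexpand v w hvw
      _ = r ^ p * dist (shift v) (shift w) ^ p := Real.mul_rpow hr dist_nonneg
      _ ≤ r ^ p * (((Fintype.card D : ℝ)⁻¹ - r ^ p)⁻¹ * dist (e (shift v)) (e (shift w)) +
          (r ^ p) ^ n) := by
        gcongr; exact he _ _
      _ = _ := by
        simp only [hindex, dist_add_left, Subtype.dist_eq, Real.dist_eq, ← mul_sub, abs_mul,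
          abs_of_nonneg hβ]
        ring
  · have hindex : index v ≠ index w := (Fintype.equivFin D).injective.ne hvw
    calc dist v w ^ p ≤ 1 := hdistp v w
      _ = ((Fintype.card D : ℝ)⁻¹ - r ^ p)⁻¹ * ((Fintype.card D : ℝ)⁻¹ - r ^ p) :=
        (inv_mul_cancel₀ hgap.ne').symm
      _ ≤ _ := by
        refine le_add_of_le_of_nonneg ?_ (by positivity)
        gcongr
        exact inv_sub_le_dist_digit_div_add hindex hβ (e (shift v)).2 (e (shift w)).2

theorem exists_dist_rpow_le_mul_dist (hp : 0 ≤ p) (hr : 0 ≤ r)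
    (hrD : r ^ p < (Fintype.card D : ℝ)⁻¹) (hdist : ∀ v w : Q, dist v w ≤ 1)
    (hexpand : ∀ v w, digit v = digit w → dist v w ≤ r * dist (shift v) (shift w)) :
    ∃ c ≥ 0, ∃ e : Q → I, ∀ v w, dist v w ^ p ≤ c * dist (e v) (e w) := by
  refine ⟨_, inv_nonneg.2 (sub_nonneg.2 hrD.le), exists_forall_le_of_forall_exists_le_add
    (G := fun t u : I ↦ ((Fintype.card D : ℝ)⁻¹ - r ^ p)⁻¹ * dist t u)
    (continuous_dist.const_mul _) fun δ hδ ↦ ?_⟩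
  have hr₁ : r ^ p < 1 := hrD.trans_le (Nat.cast_inv_le_one _)
  obtain ⟨n, hn⟩ := exists_pow_lt_of_lt_one hδ hr₁
  obtain ⟨e, he⟩ := exists_forall_dist_rpow_le_add_pow hp hr hrD hdist hexpand n
  exact ⟨e, fun v w ↦ (he v w).trans (by gcongr)⟩

/-- The tent map `t ↦ 1 - |2 t - 1|`, which maps each half of `[0, 1]` onto `[0, 1]`. -/
def tentMap (t : I) : I :=
  ⟨1 - |2 * (t : ℝ) - 1|, sub_nonneg.2 (abs_le.2 ⟨by linarith [t.2.1], by linarith [t.2.2]⟩),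
    sub_le_self _ (abs_nonneg _)⟩

theorem dist_eq_half_mul_dist_tentMap {t u : I} (h : (1 / 2 : ℝ) ≤ t ↔ (1 / 2 : ℝ) ≤ u) :
    dist t u = 1 / 2 * dist (tentMap t) (tentMap u) := by
  simp only [Subtype.dist_eq, Real.dist_eq, tentMap]
  by_cases ht : (1 / 2 : ℝ) ≤ t
  · rw [abs_of_nonneg (by linarith : 0 ≤ 2 * (t : ℝ) - 1),
      abs_of_nonneg (by linarith [h.1 ht] : 0 ≤ 2 * (u : ℝ) - 1), abs_sub_comm (t : ℝ),
      show 1 - (2 * (t : ℝ) - 1) - (1 - (2 * (u : ℝ) - 1)) = 2 * (u - t) by ring, abs_mul, abs_two]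
    ring
  · rw [abs_of_nonpos (by linarith : 2 * (t : ℝ) - 1 ≤ 0),
      abs_of_nonpos (by linarith [mt h.2 ht] : 2 * (u : ℝ) - 1 ≤ 0),
      show 1 - -(2 * (t : ℝ) - 1) - (1 - -(2 * (u : ℝ) - 1)) = 2 * (t - u) by ring, abs_mul,
      abs_two]
    ring

theorem exists_dist_rpow_le_mul_dist_of_card_lt {ι : Type*} [Fintype ι] {p : ℝ}
    (hp : Fintype.card ι < p) :
    ∃ c ≥ 0, ∃ e : (ι → I) → I, ∀ v w, dist v w ^ p ≤ c * dist (e v) (e w) := by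
  classical
  refine exists_dist_rpow_le_mul_dist (D := Set ι) (r := 1 / 2)
    (digit := fun v ↦ {i | (1 / 2 : ℝ) ≤ v i}) (shift := fun v i ↦ tentMap (v i))
    ((Nat.cast_nonneg _).trans hp.le) (by norm_num) ?_ (fun v w ↦ ?_) fun v w hvw ↦ ?_
  · rw [Fintype.card_set, Nat.cast_pow, Nat.cast_ofNat, ← inv_pow, ← one_div, ← Real.rpow_natCast]
    exact Real.rpow_lt_rpow_of_exponent_gt one_half_pos one_half_lt_one hp
  · exact (dist_pi_le_iff zero_le_one).2 fun i ↦ by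
      simpa [Subtype.dist_eq] using Real.dist_le_of_mem_Icc (v i).2 (w i).2
  · refine (dist_pi_le_iff (by positivity)).2 fun i ↦ ?_
    rw [dist_eq_half_mul_dist_tentMap (Set.ext_iff.1 hvw i)]
    gcongr
    exact dist_le_pi_dist (fun i ↦ tentMap (v i)) (fun i ↦ tentMap (w i)) i

end Coding

section LipschitzRetract

variable {ι X : Type*} [Fintype ι]

theorem exists_antilipschitzWith_of_card_lt_dimH [MetricSpace X] [CompactSpace X]
    (hdim : (Fintype.card ι : ℝ≥0∞) < dimH (univ : Set X)) :
    ∃ K, ∃ P : (ι → I) → X, AntilipschitzWith K P := by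
  obtain ⟨p, hp, hpX⟩ := ENNReal.lt_iff_exists_nnreal_btwn.1 hdim
  have hιp : (Fintype.card ι : ℝ) < p := mod_cast hp
  have hp₀ : (0 : ℝ) < p := (Nat.cast_nonneg _).trans_lt hιp
  obtain ⟨c₁, hc₁, e, he⟩ := exists_dist_rpow_le_mul_dist_of_card_lt hιp
  obtain ⟨c₂, hc₂, q, hq⟩ := exists_dist_le_mul_dist_rpow (X := X) hp₀ (by simpa using hpX)
  have hc : 0 ≤ (c₁ * c₂) ^ (p : ℝ)⁻¹ := by positivity
  refine ⟨⟨_, hc⟩, q ∘ e, AntilipschitzWith.of_le_mul_dist fun v w ↦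
    (Real.rpow_le_rpow_iff dist_nonneg (mul_nonneg hc dist_nonneg) hp₀).1 ?_⟩
  calc dist v w ^ (p : ℝ) ≤ c₁ * dist (e v) (e w) := he v w
    _ ≤ c₁ * (c₂ * dist (q (e v)) (q (e w)) ^ (p : ℝ)) := by gcongr; exact hq _ _
    _ = ((c₁ * c₂) ^ (p : ℝ)⁻¹ * dist (q (e v)) (q (e w))) ^ (p : ℝ) := by
      rw [Real.mul_rpow hc dist_nonneg, Real.rpow_inv_rpow (by positivity) hp₀.ne',
        mul_assoc]

theorem exists_lipschitzWith_leftInverse_of_antilipschitzWith [PseudoMetricSpace X] {K : ℝ≥0}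
    {P : (ι → I) → X} (hP : AntilipschitzWith K P) :
    ∃ g : X → ι → I, LipschitzWith K g ∧ LeftInverse g P := by
  have hinj : LeftInverse (invFun P) P := leftInverse_invFun hP.injective
  have hinv : LipschitzOnWith K (fun x i ↦ (invFun P x i : ℝ)) (range P) := by
    rintro _ ⟨v, rfl⟩ _ ⟨w, rfl⟩
    simp only [hinj v, hinj w]
    exact hP v w
  obtain ⟨g, hg, hgP⟩ := hinv.extend_pi
  refine ⟨fun x i ↦ projIcc 0 1 zero_le_one (g x i), fun x y ↦ ?_, fun v ↦ funext fun i ↦ ?_⟩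
  · refine (edist_pi_le_iff.2 fun i ↦ ?_).trans (hg x y)
    calc edist (projIcc 0 1 zero_le_one (g x i)) (projIcc 0 1 zero_le_one (g y i))
        ≤ edist (g x i) (g y i) := by simpa using LipschitzWith.projIcc zero_le_one (g x i) (g y i)
      _ ≤ edist (g x) (g y) := edist_le_pi_edist _ _ i
  · have hgv : g (P v) = fun i ↦ (v i : ℝ) := by simpa only [hinj v] using (hgP ⟨v, rfl⟩).symm
    simp only [hgv, projIcc_val]

theorem exists_antilipschitzWith_mem_of_card_lt_dimH [MetricSpace X] {S : Set X}
    (hS : IsSigmaCompact S) (hdim : (Fintype.card ι : ℝ≥0∞) < dimH S) :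
    ∃ K, ∃ P : (ι → I) → X, AntilipschitzWith K P ∧ ∀ v, P v ∈ S := by
  obtain ⟨A, hA, rfl⟩ := hS
  rw [dimH_iUnion, lt_iSup_iff] at hdim
  obtain ⟨n, hn⟩ := hdim
  have : CompactSpace (A n) := isCompact_iff_compactSpace.1 (hA n)
  rw [← Subtype.coe_image_univ (A n), isometry_subtype_coe.dimH_image] at hn
  obtain ⟨K, P, hP⟩ := exists_antilipschitzWith_of_card_lt_dimH hn
  exact ⟨_, _, (AntilipschitzWith.subtype_coe (A n)).comp hP,
    fun v ↦ mem_iUnion_of_mem n (P v).2⟩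

theorem compact_of_dimH_gt_mapsOnto_cube_general [MetricSpace X] {S : Set X}
    (hS : IsSigmaCompact S) (hdim : (Fintype.card ι : ℝ≥0∞) < dimH S) :
    ∃ f : X → EuclideanSpace ℝ ι, (∃ L : ℝ≥0, LipschitzWith L f) ∧
      range f = {x : EuclideanSpace ℝ ι | ∀ i, x i ∈ Icc (0 : ℝ) 1} ∧
      f '' S = {x : EuclideanSpace ℝ ι | ∀ i, x i ∈ Icc (0 : ℝ) 1} := by
  obtain ⟨K, P, hP, hPS⟩ := exists_antilipschitzWith_mem_of_card_lt_dimH hS hdim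
  obtain ⟨g, hg, hgP⟩ := exists_lipschitzWith_leftInverse_of_antilipschitzWith hP
  set f : X → EuclideanSpace ℝ ι := fun x ↦ WithLp.toLp 2 fun i ↦ (g x i : ℝ)
  set cube := {x : EuclideanSpace ℝ ι | ∀ i, x i ∈ Icc (0 : ℝ) 1}
  have hval : LipschitzWith 1 fun (v : ι → I) i ↦ (v i : ℝ) := LipschitzWith.of_edist_le fun v w ↦
    edist_pi_le_iff.2 fun i ↦ edist_le_pi_edist v w i
  have hrange : range f ⊆ cube := range_subset_iff.2 fun x i ↦ (g x i).2
  have himage : cube ⊆ f '' S := fun x hx ↦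
    ⟨P fun i ↦ ⟨x i, hx i⟩, hPS _, by simp only [f, hgP _]⟩
  exact ⟨f, ⟨_, (PiLp.lipschitzWith_toLp 2 _).comp (hval.comp hg)⟩,
    hrange.antisymm (himage.trans (image_subset_range f S)),
    ((image_subset_range f S).trans hrange).antisymm himage⟩

end LipschitzRetract

/-- If `(X,d)` is a nonempty compact metric space whose Hausdorff dimension is
strictly larger than a positive integer `k`, then there exists a Lipschitz map
`f : X → ℝ^k` whose image is exactly the `k`-dimensional cube `[0,1]^k`. -/
theorem compact_of_dimH_gt_mapsOnto_cube
    {X : Type*} [MetricSpace X] [CompactSpace X] [Nonempty X]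
    (k : ℕ) (hk : 0 < k)
    (hdim : (k : ℝ≥0∞) < dimH (Set.univ : Set X)) :
    ∃ f : X → EuclideanSpace ℝ (Fin k),
      (∃ L : ℝ≥0, LipschitzWith L f) ∧
      Set.range f = {x : EuclideanSpace ℝ (Fin k) | ∀ i, x i ∈ Set.Icc (0 : ℝ) 1} := by
  obtain ⟨f, hf, hrange, -⟩ := compact_of_dimH_gt_mapsOnto_cube_general (ι := Fin k)
    isCompact_univ.isSigmaCompact (by simpa using hdim)
  exact ⟨f, hf, hrange⟩
end

section
/- Let A be an analytic subset of a complete separable metric space X and let k be a positive integer. If the Hausdorff dimension of A is strictly larger than k, then there exists a map f : X → ℝ^k that is Lipschitz and satisfies f(A) = [0,1]^k (the k-dimensional cube). -/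
/-!
Parametrise the analytic set `A` by the Baire space and work in the subspace `A`. For
`k < s < t < dimH A`, the Hausdorff content by dyadic balls, computed modulo `μH[t]`-null sets, is
at most a constant times `r ^ s` on balls of radius `r`, and an increasing union keeps a fixed
proportion of its content at a finite stage. The latter replaces countable additivity: it allows
bounding one more Baire coordinate at each step of a construction, so that limit points stay in `A`.

A set that is massive, or scattered over many balls, at scale `2⁻ⁿ` contains separated sets, each
massive or scattered at some finer scale of its own, whose `k`-dimensional sizes add up to that of
level `n`. By the Kraft inequality the finer levels can be matched with words over an alphabet of
`2 ^ k` letters. Iterating gives points `x a` of `A`, indexed by infinite words `a`, such that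
`c * 2⁻ⁿ ≤ dist (x a) (x a')` whenever `a` and `a'` differ at the `n`-th letter. Binary expansion
`x a ↦ a` is then a Lipschitz map from these points onto the cube. Extend it to `X` by McShane's
theorem and clamp its coordinates to `[0, 1]`.
-/

open MeasureTheory
open scoped ENNReal NNReal

namespace LipschitzCube

open Set Filter Topology Metric

section Content

variable {X : Type*} [MetricSpace X]

/-- The closed ball with centre `b.1` and radius `2⁻ⁿ`, where `n = b.2` is called its level. -/
def dyadicBall (b : X × ℕ) : Set X := closedBall b.1 ((1 / 2 : ℝ) ^ b.2)

lemma ediam_dyadicBall_rpow_le {t : ℝ} (ht : 0 ≤ t) (b : X × ℕ) :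
    ediam (dyadicBall b) ^ t ≤ 2 ^ t * ((1 / 2 : ℝ≥0∞) ^ t) ^ b.2 := by
  have hdiam : ediam (dyadicBall b) ≤ 2 * (1 / 2 : ℝ≥0∞) ^ b.2 := by
    have hradius : ENNReal.ofReal ((1 / 2 : ℝ) ^ b.2) = (1 / 2 : ℝ≥0∞) ^ b.2 := by
      rw [ENNReal.ofReal_pow (by norm_num), ENNReal.ofReal_div_of_pos two_pos]
      simp
    rw [dyadicBall, ← closedEBall_ofReal (by positivity), hradius]
    exact ediam_closedEBall_le
  calc ediam (dyadicBall b) ^ t ≤ (2 * (1 / 2 : ℝ≥0∞) ^ b.2) ^ t := ENNReal.rpow_le_rpow hdiam ht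
    _ = 2 ^ t * ((1 / 2 : ℝ≥0∞) ^ t) ^ b.2 := by
      rw [ENNReal.mul_rpow_of_nonneg _ _ ht, ← ENNReal.rpow_natCast, ← ENNReal.rpow_natCast,
        ← ENNReal.rpow_mul, ← ENNReal.rpow_mul, mul_comm t]

variable [MeasurableSpace X] [BorelSpace X]

lemma hausdorffMeasure_eq_zero_of_covers {t : ℝ} (ht : 0 < t) {S : Set X}
    (h : ∀ ε : ℝ≥0∞, ε ≠ 0 → ∃ (I : Type) (_ : Countable I) (b : I → X × ℕ),
      S ⊆ ⋃ i, dyadicBall (b i) ∧ ∑' i, ((1 / 2 : ℝ≥0∞) ^ t) ^ (b i).2 ≤ ε) : μH[t] S = 0 := by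
  choose I _ b hcover hcost using fun j : ℕ => h (j : ℝ≥0∞)⁻¹ (by simp)
  have h2t : (2 : ℝ≥0∞) ^ t ≠ ⊤ := ENNReal.rpow_ne_top_of_nonneg ht.le (by simp)
  have hlim : Tendsto (fun j : ℕ => 2 ^ t * (j : ℝ≥0∞)⁻¹) atTop (𝓝 0) := by
    simpa using ENNReal.Tendsto.const_mul ENNReal.tendsto_inv_nat_nhds_zero (Or.inr h2t)
  have hradii : Tendsto (fun j : ℕ => (2 ^ t * (j : ℝ≥0∞)⁻¹) ^ t⁻¹) atTop (𝓝 0) := by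
    simpa [ENNReal.zero_rpow_of_pos (inv_pos.2 ht)] using hlim.ennrpow_const t⁻¹
  have hsum (j : ℕ) : ∑' i, ediam (dyadicBall (b j i)) ^ t ≤ 2 ^ t * (j : ℝ≥0∞)⁻¹ :=
    calc ∑' i, ediam (dyadicBall (b j i)) ^ t
        ≤ ∑' i, 2 ^ t * ((1 / 2 : ℝ≥0∞) ^ t) ^ (b j i).2 :=
          ENNReal.tsum_le_tsum fun i => ediam_dyadicBall_rpow_le ht.le _
      _ = 2 ^ t * ∑' i, ((1 / 2 : ℝ≥0∞) ^ t) ^ (b j i).2 := ENNReal.tsum_mul_left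
      _ ≤ 2 ^ t * (j : ℝ≥0∞)⁻¹ := by gcongr; exact hcost j
  have hdiam (j : ℕ) (i : I j) : ediam (dyadicBall (b j i)) ≤ (2 ^ t * (j : ℝ≥0∞)⁻¹) ^ t⁻¹ :=
    (ENNReal.le_rpow_inv_iff ht).2 ((ENNReal.le_tsum i).trans (hsum j))
  have hliminf := Measure.hausdorffMeasure_le_liminf_tsum t S _ hradii
    (fun j i => dyadicBall (b j i)) (.of_forall hdiam) (.of_forall hcover)
  exact le_antisymm
    (hliminf.trans ((liminf_le_liminf (.of_forall hsum)).trans hlim.liminf_eq.le)) zero_le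

lemma hausdorffMeasure_eq_zero_of_ae_covers {t : ℝ} (ht : 0 < t) {S : Set X}
    (h : ∀ ε : ℝ≥0∞, ε ≠ 0 → ∃ (I : Type) (_ : Countable I) (b : I → X × ℕ),
      μH[t] (S \ ⋃ i, dyadicBall (b i)) = 0 ∧ ∑' i, ((1 / 2 : ℝ≥0∞) ^ t) ^ (b i).2 ≤ ε) :
    μH[t] S = 0 := by
  choose I _ b hcover hcost using fun j : ℕ => h (j : ℝ≥0∞)⁻¹ (by simp)
  have huncovered : μH[t] (⋃ j, S \ ⋃ i, dyadicBall (b j i)) = 0 := measure_iUnion_null hcover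
  have hcovered : μH[t] (⋂ j, ⋃ i, dyadicBall (b j i)) = 0 := by
    refine hausdorffMeasure_eq_zero_of_covers ht fun ε hε => ?_
    obtain ⟨j, hj⟩ := ENNReal.exists_inv_nat_lt hε
    exact ⟨I j, inferInstance, b j, iInter_subset _ j, (hcost j).trans hj.le⟩
  refine measure_mono_null (fun x hx => ?_) (measure_union_null huncovered hcovered)
  by_cases hmem : ∀ j, x ∈ ⋃ i, dyadicBall (b j i)
  · exact Or.inr (mem_iInter.2 hmem)
  · obtain ⟨j, hj⟩ := not_forall.1 hmem
    exact Or.inl (mem_iUnion.2 ⟨j, hx, hj⟩)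

/-- The cheapest cost `q ^ n` of a dyadic ball of level `n` containing `E` up to a
`μH[t]`-null set. -/
noncomputable def ballCost (t : ℝ) (q : ℝ≥0∞) (E : Set X) : ℝ≥0∞ :=
  ⨅ (b : X × ℕ) (_ : μH[t] (E \ dyadicBall b) = 0), q ^ b.2

/-- The Hausdorff content in which only dyadic balls are used, a ball of level `n` costs `q ^ n`,
and `μH[t]`-null sets are free. -/
noncomputable def dyadicContent (t : ℝ) (q : ℝ≥0∞) : OuterMeasure X :=
  OuterMeasure.boundedBy (ballCost t q)

variable {t : ℝ} {q : ℝ≥0∞}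

lemma dyadicContent_le_pow {E : Set X} {b : X × ℕ} (h : μH[t] (E \ dyadicBall b) = 0) :
    dyadicContent t q E ≤ q ^ b.2 :=
  (OuterMeasure.boundedBy_le E).trans (iInf₂_le_of_le b h le_rfl)

lemma dyadicContent_dyadicBall_le (b : X × ℕ) : dyadicContent t q (dyadicBall b) ≤ q ^ b.2 :=
  dyadicContent_le_pow (by simp)

lemma ballCost_eq_zero [Nonempty X] (hq : q < 1) {E : Set X} (h : μH[t] E = 0) :
    ballCost t q E = 0 := by
  obtain ⟨x⟩ := ‹Nonempty X›
  exact le_antisymm (ge_of_tendsto' (ENNReal.tendsto_pow_atTop_nhds_zero_of_lt_one hq) fun n =>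
    iInf₂_le_of_le (x, n) (measure_mono_null sdiff_subset h) le_rfl) zero_le

lemma dyadicContent_eq_zero_of_null [Nonempty X] (hq : q < 1) {E : Set X} (h : μH[t] E = 0) :
    dyadicContent t q E = 0 :=
  le_antisymm ((OuterMeasure.boundedBy_le E).trans (ballCost_eq_zero hq h).le) zero_le

lemma exists_cover_of_dyadicContent_lt [Nonempty X] (hq : q < 1) {E : Set X} {η : ℝ≥0∞}
    (h : dyadicContent t q E < η) : ∃ b : ℕ → X × ℕ,
      μH[t] (E \ ⋃ i, dyadicBall (b i)) = 0 ∧ ∑' i, q ^ (b i).2 < η := by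
  rw [dyadicContent, OuterMeasure.boundedBy_eq_ofFunction (ballCost_eq_zero hq (by simp)),
    OuterMeasure.ofFunction_apply] at h
  simp only [iInf_lt_iff] at h
  obtain ⟨T, hT, hlt⟩ := h
  obtain ⟨ε, hε0, hε⟩ := ENNReal.exists_pos_sum_of_countable (tsub_pos_of_lt hlt).ne' ℕ
  have hfin : ∑' i, ballCost t q (T i) ≠ ⊤ := hlt.ne_top
  have hball (i : ℕ) : ∃ b : X × ℕ, μH[t] (T i \ dyadicBall b) = 0 ∧
      q ^ b.2 < ballCost t q (T i) + ε i := by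
    have hlt_add : ballCost t q (T i) < ballCost t q (T i) + ε i :=
      ENNReal.lt_add_right (ENNReal.ne_top_of_tsum_ne_top hfin i) (by simpa using (hε0 i).ne')
    obtain ⟨b, hb⟩ := iInf_lt_iff.1 hlt_add
    obtain ⟨hcover, hcost⟩ := iInf_lt_iff.1 hb
    exact ⟨b, hcover, hcost⟩
  choose b hcover hcost using hball
  refine ⟨b, measure_mono_null ?_ (measure_iUnion_null hcover), ?_⟩
  · rintro x ⟨hxE, hxb⟩
    obtain ⟨i, hi⟩ := mem_iUnion.1 (hT hxE)
    exact mem_iUnion.2 ⟨i, hi, fun hxi => hxb (mem_iUnion.2 ⟨i, hxi⟩)⟩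
  · calc ∑' i, q ^ (b i).2 ≤ ∑' i, (ballCost t q (T i) + ε i) :=
          ENNReal.tsum_le_tsum fun i => (hcost i).le
      _ = ∑' i, ballCost t q (T i) + ∑' i, (ε i : ℝ≥0∞) := ENNReal.tsum_add
      _ < ∑' i, ballCost t q (T i) + (η - ∑' i, ballCost t q (T i)) :=
          ENNReal.add_lt_add_left hfin hε
      _ = η := add_tsub_cancel_of_le hlt.le

lemma hausdorffMeasure_eq_zero_of_dyadicContent [Nonempty X] (ht : 0 < t) (hq : q < 1)
    (hpq : (1 / 2 : ℝ≥0∞) ^ t ≤ q) {E : Set X} (h : dyadicContent t q E = 0) : μH[t] E = 0 := by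
  refine hausdorffMeasure_eq_zero_of_ae_covers ht fun ε hε => ?_
  obtain ⟨b, hcover, hcost⟩ := exists_cover_of_dyadicContent_lt hq (h.trans_lt hε.bot_lt)
  refine ⟨ℕ, inferInstance, b, hcover, le_trans (ENNReal.tsum_le_tsum fun i => ?_) hcost.le⟩
  gcongr

end Content

section Increasing

variable {p q η : ℝ≥0∞}

lemma finite_setOf_le_of_tsum_pow_ne_top {I : Type*} {d : I → ℕ} (hq0 : q ≠ 0) (hq1 : q ≤ 1)
    (hd : ∑' i, q ^ d i ≠ ⊤) (L : ℕ) : {i | d i ≤ L}.Finite :=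
  (ENNReal.finite_const_le_of_tsum_ne_top hd (pow_ne_zero L hq0)).subset fun _ hi =>
    pow_le_pow_right_of_le_one' hq1 hi

lemma tsum_pow_tail_le (hpq : p ≤ q) (hq0 : q ≠ 0) (hqt : q ≠ ⊤) {N : ℕ} {d : Fin N × ℕ → ℕ}
    (hd : ∀ a, ∑' i, q ^ d (a, i) ≤ η) (L : ℕ) :
    ∑' a : {a // L < d a}, p ^ d a ≤ (p / q) ^ L * (N * η) :=
  calc ∑' a : {a // L < d a}, p ^ d a
      ≤ ∑' a : {a // L < d a}, (fun a => (p / q) ^ L * q ^ d a) a.1 := by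
        refine ENNReal.tsum_le_tsum fun a => ?_
        obtain ⟨l, hl⟩ := Nat.exists_eq_add_of_le a.2.le
        simp only [hl]
        calc p ^ (L + l) = ((p / q) * q) ^ L * p ^ l := by
              rw [ENNReal.div_mul_cancel hq0 hqt, pow_add]
          _ ≤ ((p / q) * q) ^ L * q ^ l := by gcongr
          _ = (p / q) ^ L * q ^ (L + l) := by ring
    _ ≤ ∑' a, (p / q) ^ L * q ^ d a :=
        ENNReal.tsum_comp_le_tsum_of_injective Subtype.val_injective _
    _ = (p / q) ^ L * ∑ a, ∑' i, q ^ d (a, i) := by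
        rw [ENNReal.tsum_mul_left, ENNReal.tsum_prod', tsum_fintype]
    _ ≤ (p / q) ^ L * (N * η) := by
        gcongr
        exact (Finset.sum_le_card_nsmul _ _ η fun a _ => hd a).trans_eq (by simp)

lemma tendsto_pow_mul_add_two {ρ : ℝ≥0∞} (hρ : ρ < 1) :
    Tendsto (fun n : ℕ => ρ ^ n * ((n + 2 : ℕ) : ℝ≥0∞)) atTop (𝓝 0) := by
  lift ρ to ℝ≥0 using hρ.ne_top
  have hρ1 : (ρ : ℝ) < 1 := by exact_mod_cast hρ
  have hreal : Tendsto (fun n : ℕ => (n : ℝ) * ρ ^ n + 2 * ρ ^ n) atTop (𝓝 0) := by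
    simpa using (tendsto_self_mul_const_pow_of_lt_one ρ.coe_nonneg hρ1).add
      ((tendsto_pow_atTop_nhds_zero_of_lt_one ρ.coe_nonneg hρ1).const_mul 2)
  have hnnreal : Tendsto (fun n : ℕ => ρ ^ n * ((n + 2 : ℕ) : ℝ≥0)) atTop (𝓝 0) :=
    NNReal.tendsto_coe.1 (hreal.congr fun n => by push_cast; ring)
  exact (ENNReal.tendsto_coe.2 hnnreal).congr fun n => by push_cast; rfl

variable {X : Type*} [MetricSpace X]

/-- Given a sequence of families of dyadic balls `b m`, the points that are within `2 * 2⁻ⁿ` of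
the centre of a ball of level `n` in `b m` for most `m`. Most is meant along an ultrafilter, so
that a point which is not persistent is far from the balls of level `n` for most `m`. -/
def persistentCenters (b : ℕ → ℕ → X × ℕ) (n : ℕ) : Set X :=
  {v | ∀ᶠ m in hyperfilter ℕ, ∃ i, (b m i).2 = n ∧ dist (b m i).1 v ≤ 2 * (1 / 2) ^ n}

variable {b : ℕ → ℕ → X × ℕ}

lemma tsum_pow_le_of_separated {V : ℕ → Set X} (hV : ∀ n, V n ⊆ persistentCenters b n)
    (hsep : ∀ n, (V n).Pairwise fun v w => 4 * (1 / 2) ^ n < dist v w)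
    (hb : ∀ m, ∑' i, q ^ (b m i).2 ≤ η) : ∑' w : Σ n, V n, q ^ w.1 ≤ η := by
  rw [ENNReal.tsum_eq_iSup_sum]
  refine iSup_le fun S => ?_
  have hfinite : ∀ᶠ m in hyperfilter ℕ, ∀ w ∈ S,
      ∃ i, (b m i).2 = w.1 ∧ dist (b m i).1 w.2 ≤ 2 * (1 / 2) ^ w.1 :=
    (eventually_all_finset S).2 fun w _ => hV w.1 w.2.2
  obtain ⟨m, hm⟩ := hfinite.exists
  choose! i hlevel hdist using hm
  have hinj : Function.Injective fun w : S => i w.1 := by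
    rintro ⟨⟨n, v⟩, hv⟩ ⟨⟨n', v'⟩, hv'⟩ (heq : i ⟨n, v⟩ = i ⟨n', v'⟩)
    obtain rfl : n = n' := (hlevel _ hv).symm.trans (heq ▸ hlevel _ hv')
    by_contra hne
    have hfar := hsep n v.2 v'.2 fun h => hne (by simp [Subtype.ext h])
    have hnear := hdist _ hv
    have hnear' := hdist _ hv'
    rw [← heq] at hnear'
    linarith [dist_triangle_left (v : X) v' (b m (i ⟨n, v⟩)).1]
  calc ∑ w ∈ S, q ^ w.1 = ∑' w : S, q ^ (b m (i w.1)).2 := by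
        rw [tsum_fintype, ← Finset.sum_coe_sort]
        exact Finset.sum_congr rfl fun w _ => by rw [hlevel w.1 w.2]
    _ ≤ ∑' l, q ^ (b m l).2 :=
        ENNReal.tsum_comp_le_tsum_of_injective hinj fun l => q ^ (b m l).2
    _ ≤ η := hb m

/-- A ball of level at most `L` in one of the families `b (f 0)`, `b (f 1)`, … is either centred at
a persistent point or disjoint from all balls of the same level in the later families. -/
def IsSparseSubsequence (b : ℕ → ℕ → X × ℕ) (L : ℕ) (f : ℕ → ℕ) : Prop :=
  ∀ ⦃a a'⦄, a < a' → ∀ i i', (b (f a) i).2 ≤ L → (b (f a') i').2 = (b (f a) i).2 →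
    (b (f a) i).1 ∉ persistentCenters b (b (f a) i).2 →
    2 * (1 / 2) ^ (b (f a) i).2 < dist (b (f a') i').1 (b (f a) i).1

lemma exists_isSparseSubsequence (hq0 : q ≠ 0) (hq1 : q ≤ 1)
    (hb : ∀ m, ∑' i, q ^ (b m i).2 ≠ ⊤) (j L : ℕ) :
    ∃ f : ℕ → ℕ, (∀ a, j ≤ f a) ∧ IsSparseSubsequence b L f := by
  obtain ⟨f, hj, hsparse⟩ := exists_seq_of_forall_finset_exists (fun m => j ≤ m)
    (fun m m' => ∀ i ∈ {i | (b m i).2 ≤ L}, (b m i).1 ∉ persistentCenters b (b m i).2 →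
      ∀ i', (b m' i').2 = (b m i).2 → 2 * (1 / 2) ^ (b m i).2 < dist (b m' i').1 (b m i).1) (by
    intro S _
    have hlarge : ∀ᶠ m' in (hyperfilter ℕ : Filter ℕ), j ≤ m' :=
      Nat.hyperfilter_le_atTop (eventually_ge_atTop j)
    refine (hlarge.and ((eventually_all_finset S).2 fun m _ => (eventually_all_finite
      (finite_setOf_le_of_tsum_pow_ne_top hq0 hq1 (hb m) L)).2 fun i _ => ?_)).exists
    by_cases hpersistent : (b m i).1 ∈ persistentCenters b (b m i).2
    · exact .of_forall fun _ hnot => absurd hpersistent hnot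
    · filter_upwards [Ultrafilter.eventually_not.2 hpersistent] with m' hm' _ i' hi'
      exact lt_of_not_ge fun hle => hm' ⟨i', hi', hle⟩)
  exact ⟨f, hj, fun a a' haa' i i' hi hi' hnot => hsparse a a' haa' i hi hnot i' hi'⟩

/-- Two of `L + 2` covering balls of level at most `L` share their level, and both contain `x`. -/
lemma IsSparseSubsequence.exists_mem_dyadicBall {L : ℕ} {f : ℕ → ℕ}
    (hf : IsSparseSubsequence b L f) {x : X}
    (hx : ∀ a : Fin (L + 2), ∃ i, x ∈ dyadicBall (b (f a) i) ∧ (b (f a) i).2 ≤ L) :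
    ∃ n, ∃ g ∈ persistentCenters b n, x ∈ dyadicBall (g, n) := by
  choose i hmem hlevel using hx
  obtain ⟨a, a', hne, heq⟩ := Fintype.exists_ne_map_eq_of_card_lt
    (fun a : Fin (L + 2) => (⟨(b (f a) (i a)).2, Nat.lt_succ_of_le (hlevel a)⟩ : Fin (L + 1)))
    (by simp)
  simp only [Fin.mk.injEq] at heq
  wlog hlt : a < a' generalizing a a'
  · exact this a' a hne.symm heq.symm (lt_of_le_of_ne (not_lt.1 hlt) hne.symm)
  by_contra hnot
  push Not at hnot
  have hfar := hf hlt (i a) (i a') (hlevel a) heq.symm fun hg => hnot _ _ hg (hmem a)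
  have hnear : dist x (b (f a) (i a)).1 ≤ (1 / 2) ^ (b (f a) (i a)).2 := hmem a
  have hnear' : dist x (b (f a') (i a')).1 ≤ (1 / 2) ^ (b (f a') (i a')).2 := hmem a'
  rw [← heq] at hnear'
  linarith [dist_triangle_left (b (f a') (i a')).1 (b (f a) (i a)).1 x]

end Increasing

section IncreasingContent

variable {X : Type*} [MetricSpace X]

lemma exists_separated_net (G : Set X) {d : ℝ} (hd : 0 ≤ d) :
    ∃ V ⊆ G, (V.Pairwise fun v w => d < dist v w) ∧ ∀ g ∈ G, ∃ v ∈ V, dist g v ≤ d := by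
  obtain ⟨V, -, hV⟩ := zorn_subset_nonempty
    {V : Set X | V ⊆ G ∧ V.Pairwise fun v w => d < dist v w} (fun c hc hchain _ =>
      ⟨⋃₀ c, ⟨sUnion_subset fun V hV => (hc hV).1, (pairwise_sUnion hchain.directedOn).2
        fun V hV => (hc hV).2⟩, fun V hV => subset_sUnion_of_mem hV⟩) ∅ (by simp)
  refine ⟨V, hV.prop.1, hV.prop.2, fun g hg => ?_⟩
  by_contra! hfar
  have hgV : g ∉ V := fun hgV => (hfar g hgV).not_ge (by simpa using hd)
  refine hgV (hV.le_of_ge ⟨insert_subset hg hV.prop.1, hV.prop.2.insert fun v hv _ => ?_⟩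
    (subset_insert g V) (mem_insert g V))
  exact ⟨hfar v hv, by simpa [dist_comm] using hfar v hv⟩

variable {b : ℕ → ℕ → X × ℕ} {t : ℝ} {q η : ℝ≥0∞}

lemma three_le_level_of_mem_persistentCenters (hq : q ≤ 1) (hη : η ≤ q ^ 3)
    (hcost : ∀ m, ∑' i, q ^ (b m i).2 < η) {n : ℕ} {v : X} (hv : v ∈ persistentCenters b n) :
    3 ≤ n := by
  obtain ⟨m, i, rfl, -⟩ := Eventually.exists (f := (hyperfilter ℕ : Filter ℕ)) hv
  by_contra! hlt
  exact (hη.trans (pow_le_pow_right_of_le_one' hq hlt.le)).not_gt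
    ((ENNReal.le_tsum i).trans_lt (hcost m))

variable [MeasurableSpace X] [BorelSpace X]

lemma pow_three_mul_dyadicContent_iUnion_le {I : Type*} [Countable I] (b : I → X × ℕ)
    (hb : ∀ i, 3 ≤ (b i).2) :
    q ^ 3 * dyadicContent t q (⋃ i, closedBall (b i).1 (8 * (1 / 2) ^ (b i).2)) ≤
      ∑' i, q ^ (b i).2 := by
  calc q ^ 3 * dyadicContent t q (⋃ i, closedBall (b i).1 (8 * (1 / 2) ^ (b i).2))
      ≤ q ^ 3 * ∑' i, dyadicContent t q (closedBall (b i).1 (8 * (1 / 2) ^ (b i).2)) := by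
        gcongr; exact measure_iUnion_le _
    _ = ∑' i, q ^ 3 * dyadicContent t q (closedBall (b i).1 (8 * (1 / 2) ^ (b i).2)) :=
        ENNReal.tsum_mul_left.symm
    _ ≤ ∑' i, q ^ (b i).2 := by
        refine ENNReal.tsum_le_tsum fun i => ?_
        obtain ⟨n, hn⟩ := Nat.exists_eq_add_of_le (hb i)
        have hball : closedBall (b i).1 (8 * (1 / 2) ^ (b i).2) = dyadicBall ((b i).1, n) := by
          rw [dyadicBall, hn, pow_add]; ring_nf
        rw [hball, hn, pow_add]
        gcongr
        exact dyadicContent_dyadicBall_le _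

lemma hausdorffMeasure_sdiff_persistent_eq_zero (ht : 0 < t) (hq : q < 1)
    (hpq : (1 / 2 : ℝ≥0∞) ^ t < q) (hη : η ≠ ⊤) {E : ℕ → Set X} (hE : Monotone E)
    (hcover : ∀ m, μH[t] (E m \ ⋃ i, dyadicBall (b m i)) = 0)
    (hcost : ∀ m, ∑' i, q ^ (b m i).2 ≤ η) (j : ℕ) :
    μH[t] (E j \ ⋃ n, ⋃ g ∈ persistentCenters b n, dyadicBall (g, n)) = 0 := by
  have hq0 : q ≠ 0 := hpq.ne_bot
  have hqt : q ≠ ⊤ := hq.ne_top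
  refine hausdorffMeasure_eq_zero_of_ae_covers ht fun ε hε => ?_
  have htail : Tendsto (fun L : ℕ => ((1 / 2) ^ t / q) ^ L * ((L + 2 : ℕ) * η)) atTop (𝓝 0) := by
    have hρ : (1 / 2 : ℝ≥0∞) ^ t / q < 1 :=
      (ENNReal.div_lt_iff (Or.inl hq0) (Or.inl hqt)).2 (by simpa using hpq)
    simpa [mul_assoc] using ENNReal.Tendsto.mul_const (tendsto_pow_mul_add_two hρ) (Or.inr hη)
  obtain ⟨L, hL⟩ := (htail.eventually (gt_mem_nhds hε.bot_lt)).exists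
  obtain ⟨f, hjf, hf⟩ := exists_isSparseSubsequence hq0 hq.le
    (fun m => ne_top_of_le_ne_top hη (hcost m)) j L
  refine ⟨{a : Fin (L + 2) × ℕ // L < (b (f a.1) a.2).2}, inferInstance,
    fun a => b (f a.1.1) a.1.2, ?_, ?_⟩
  · refine measure_mono_null ?_ (measure_iUnion_null fun a : Fin (L + 2) => hcover (f a))
    rintro x ⟨⟨hxE, hxG⟩, hxtail⟩
    by_contra hx
    simp only [mem_iUnion, Set.mem_sdiff, not_exists, not_and, not_forall, not_not] at hx
    obtain ⟨n, g, hg, hxg⟩ := hf.exists_mem_dyadicBall (x := x) fun a => by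
      obtain ⟨i, hi⟩ := hx a (hE (hjf a) hxE)
      exact ⟨i, hi, not_lt.1 fun hlt => hxtail (mem_iUnion.2 ⟨⟨(a, i), hlt⟩, hi⟩)⟩
    exact hxG (mem_iUnion.2 ⟨n, mem_iUnion₂.2 ⟨g, hg, hxg⟩⟩)
  · exact (tsum_pow_tail_le (d := fun a => (b (f a.1) a.2).2) hpq.le hq0 hqt
      (fun a => hcost (f a)) L).trans hL.le

lemma pow_three_mul_dyadicContent_persistent_le (hq0 : q ≠ 0) (hq : q ≤ 1) (hη : η ≤ q ^ 3)
    (hcost : ∀ m, ∑' i, q ^ (b m i).2 < η) :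
    q ^ 3 * dyadicContent t q (⋃ n, ⋃ g ∈ persistentCenters b n, dyadicBall (g, n)) ≤ η := by
  choose V hVG hVsep hVnet using fun n =>
    exists_separated_net (persistentCenters b n) (d := 4 * (1 / 2) ^ n) (by positivity)
  have hsum : ∑' w : Σ n, V n, q ^ w.1 ≤ η :=
    tsum_pow_le_of_separated hVG hVsep fun m => (hcost m).le
  have hηt : η ≠ ⊤ :=
    ne_top_of_le_ne_top (ENNReal.pow_ne_top (hq.trans_lt ENNReal.one_lt_top).ne) hη
  have : Countable (Σ n, V n) := by
    have hsupp := Summable.countable_support_ennreal (ne_top_of_le_ne_top hηt hsum)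
    rwa [show Function.support (fun w : Σ n, V n => q ^ w.1) = univ by ext; simp [hq0],
      countable_univ_iff] at hsupp
  refine le_trans ?_ ((pow_three_mul_dyadicContent_iUnion_le (t := t)
    (fun w : Σ n, V n => ((w.2 : X), w.1)) fun w =>
      three_le_level_of_mem_persistentCenters hq hη hcost (hVG _ w.2.2)).trans hsum)
  gcongr
  refine iUnion_subset fun n => iUnion₂_subset fun g hg x hx => ?_
  obtain ⟨v, hv, hgv⟩ := hVnet n g hg
  have hxg : dist x g ≤ (1 / 2) ^ n := hx
  have hpos : (0 : ℝ) < (1 / 2) ^ n := by positivity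
  exact mem_iUnion.2 ⟨⟨n, v, hv⟩, mem_closedBall.2 (by linarith [dist_triangle x g v])⟩

theorem pow_three_mul_dyadicContent_iUnion_le_of_monotone [Nonempty X] (ht : 0 < t) (hq : q < 1)
    (hpq : (1 / 2 : ℝ≥0∞) ^ t < q) {E : ℕ → Set X} (hE : Monotone E) (hη : η ≤ q ^ 3)
    (h : ∀ m, dyadicContent t q (E m) < η) : q ^ 3 * dyadicContent t q (⋃ m, E m) ≤ η := by
  choose b hcover hcost using fun m => exists_cover_of_dyadicContent_lt hq (h m)
  have hηt : η ≠ ⊤ := ne_top_of_le_ne_top (ENNReal.pow_ne_top hq.ne_top) hη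
  set B : Set X := ⋃ n, ⋃ g ∈ persistentCenters b n, dyadicBall (g, n)
  have hnull : dyadicContent t q ((⋃ m, E m) \ B) = 0 := by
    rw [iUnion_sdiff]
    exact measure_iUnion_null fun j => dyadicContent_eq_zero_of_null hq <|
      hausdorffMeasure_sdiff_persistent_eq_zero ht hq hpq hηt hE hcover (fun m => (hcost m).le) j
  calc q ^ 3 * dyadicContent t q (⋃ m, E m)
      ≤ q ^ 3 * (dyadicContent t q B + dyadicContent t q ((⋃ m, E m) \ B)) := by
        gcongr
        exact (measure_mono (by simp)).trans (measure_union_le B ((⋃ m, E m) \ B))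
    _ = q ^ 3 * dyadicContent t q B := by rw [hnull, add_zero]
    _ ≤ η := pow_three_mul_dyadicContent_persistent_le hpq.ne_bot hq.le hη hcost

end IncreasingContent

section FrostmanContent

variable {X : Type*} [MetricSpace X]

/-- An outer measure that grows on dyadic balls at most like the `s`-th power of the radius, as in
Frostman's lemma. Countable additivity is replaced by the property that, up to the constant `c`,
the mass of an increasing union is already attained at a finite stage. -/
structure IsFrostmanContent (s : ℝ) (c : ℝ≥0) (μ : OuterMeasure X) : Prop where
  const_pos : 0 < c
  measure_univ_le_one : μ univ ≤ 1
  dyadicBall_le : ∀ b, μ (dyadicBall b) ≤ ((1 / 2 : ℝ≥0∞) ^ s) ^ b.2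
  exists_mul_iUnion_le : ∀ {P : ℕ → Set X}, Monotone P → ∃ N, c * μ (⋃ n, P n) ≤ μ (P N)

variable [MeasurableSpace X] [BorelSpace X]

lemma exists_pow_four_mul_dyadicContent_iUnion_le [Nonempty X] {t : ℝ} {q : ℝ≥0∞} (ht : 0 < t)
    (hq : q < 1) (hpq : (1 / 2 : ℝ≥0∞) ^ t < q) {E : ℕ → Set X} (hE : Monotone E)
    (h1 : dyadicContent t q (⋃ m, E m) ≤ 1) :
    ∃ N, q ^ 4 * dyadicContent t q (⋃ m, E m) ≤ dyadicContent t q (E N) := by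
  rcases eq_or_ne (dyadicContent t q (⋃ m, E m)) 0 with h0 | h0
  · exact ⟨0, by simp [h0]⟩
  by_contra! hlt
  have hle := pow_three_mul_dyadicContent_iUnion_le_of_monotone ht hq hpq hE
    ((mul_le_mul' (pow_le_pow_right_of_le_one' hq.le (Nat.le_succ 3)) h1).trans_eq (mul_one _)) hlt
  have hq3 : q ^ 3 ≠ 0 := pow_ne_zero 3 hpq.ne_bot
  have hq3t : q ^ 3 ≠ ⊤ := ENNReal.pow_ne_top hq.ne_top
  have hE1 := ne_top_of_le_ne_top ENNReal.one_ne_top h1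
  refine hle.not_gt ((ENNReal.mul_lt_mul_iff_left h0 hE1).2 ?_)
  calc q ^ 4 = q ^ 3 * q := pow_succ q 3
    _ < q ^ 3 * 1 := (ENNReal.mul_lt_mul_iff_right hq3 hq3t).2 hq
    _ = q ^ 3 := mul_one _

lemma exists_isFrostmanContent [SecondCountableTopology X] {s t : ℝ} (hs : 0 < s) (hst : s < t)
    (hH : μH[t] (univ : Set X) ≠ 0) :
    ∃ (c : ℝ≥0) (μ : OuterMeasure X), IsFrostmanContent s c μ ∧ μ univ ≠ 0 := by
  obtain ⟨x, -⟩ : (univ : Set X).Nonempty := nonempty_of_measure_ne_zero hH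
  have : Nonempty X := ⟨x⟩
  have hhalf : (1 / 2 : ℝ≥0∞) < 1 := by simp
  set q : ℝ≥0∞ := (1 / 2) ^ s
  have hq : q < 1 := ENNReal.rpow_lt_one hhalf hs
  have hpq : (1 / 2 : ℝ≥0∞) ^ t < q := ENNReal.rpow_lt_rpow_of_exponent_gt (by simp) hhalf hst
  obtain ⟨x, hx⟩ : ∃ x, dyadicContent t q (dyadicBall (x, 0)) ≠ 0 := by
    by_contra! hnull
    refine hH (hausdorffMeasure_eq_zero_of_dyadicContent (hs.trans hst) hq hpq.le ?_)
    exact measure_null_of_locally_null _ fun x _ =>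
      ⟨_, mem_nhdsWithin_of_mem_nhds (closedBall_mem_nhds x (by positivity)), hnull x⟩
  have hone (E : Set X) : dyadicContent t q (E ∩ dyadicBall (x, 0)) ≤ 1 :=
    (measure_mono inter_subset_right).trans ((dyadicContent_dyadicBall_le _).trans_eq (pow_zero q))
  refine ⟨(q ^ 4).toNNReal, OuterMeasure.restrict (dyadicBall (x, 0)) (dyadicContent t q), ?_, ?_⟩
  · refine ⟨ENNReal.toNNReal_pos (pow_ne_zero 4 hpq.ne_bot) (ENNReal.pow_ne_top hq.ne_top),
      (OuterMeasure.restrict_apply ..).trans_le (hone univ), fun b => ?_, fun {P} hP => ?_⟩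
    · rw [OuterMeasure.restrict_apply]
      exact (measure_mono inter_subset_left).trans (dyadicContent_dyadicBall_le b)
    · simp only [OuterMeasure.restrict_apply, iUnion_inter]
      rw [ENNReal.coe_toNNReal (ENNReal.pow_ne_top hq.ne_top)]
      refine exists_pow_four_mul_dyadicContent_iUnion_le (hs.trans hst) hq hpq
        (fun i j hij => inter_subset_inter_left _ (hP hij)) ?_
      rw [← iUnion_inter]
      exact hone _
  · rwa [OuterMeasure.restrict_apply, univ_inter]

end FrostmanContent

section Mass

variable {X : Type*} {μ : OuterMeasure X} {E F : Set X}

/-- The value of a finite outer measure as a real number. -/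
noncomputable def mass (μ : OuterMeasure X) (E : Set X) : ℝ := (μ E).toReal

lemma mass_nonneg : 0 ≤ mass μ E := ENNReal.toReal_nonneg

lemma measure_ne_top_of_univ (hμ : μ univ ≠ ⊤) : μ E ≠ ⊤ :=
  ne_top_of_le_ne_top hμ (measure_mono (subset_univ E))

lemma mass_mono (hμ : μ univ ≠ ⊤) (h : E ⊆ F) : mass μ E ≤ mass μ F :=
  ENNReal.toReal_mono (measure_ne_top_of_univ hμ) (measure_mono h)

lemma mass_le_inter_add_sdiff (hμ : μ univ ≠ ⊤) : mass μ E ≤ mass μ (E ∩ F) + mass μ (E \ F) := by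
  rw [mass, mass, mass, ← ENNReal.toReal_add (measure_ne_top_of_univ hμ)
    (measure_ne_top_of_univ hμ)]
  exact ENNReal.toReal_mono
    (ENNReal.add_ne_top.2 ⟨measure_ne_top_of_univ hμ, measure_ne_top_of_univ hμ⟩)
    (measure_le_inter_add_sdiff μ E F)

lemma mass_pos_iff (hμ : μ univ ≠ ⊤) : 0 < mass μ E ↔ μ E ≠ 0 := by
  rw [mass, ENNReal.toReal_pos_iff, pos_iff_ne_zero, and_iff_left]
  exact (measure_ne_top_of_univ hμ).lt_top

variable [MetricSpace X] {s : ℝ} {c : ℝ≥0}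

namespace IsFrostmanContent

lemma measure_univ_ne_top (hμ : IsFrostmanContent s c μ) : μ univ ≠ ⊤ :=
  ne_top_of_le_ne_top ENNReal.one_ne_top hμ.measure_univ_le_one

lemma mass_le_one (hμ : IsFrostmanContent s c μ) : mass μ E ≤ 1 :=
  ENNReal.toReal_le_of_le_ofReal zero_le_one <| by
    simpa using (measure_mono (subset_univ E)).trans hμ.measure_univ_le_one

lemma mass_inter_closedBall_le (hμ : IsFrostmanContent s c μ) (x : X) (n : ℕ) :
    mass μ (E ∩ closedBall x ((1 / 2) ^ n)) ≤ ((1 / 2 : ℝ) ^ n) ^ s := by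
  have hpow : (((1 / 2 : ℝ≥0∞) ^ s) ^ n).toReal = ((1 / 2 : ℝ) ^ n) ^ s := by
    rw [ENNReal.toReal_pow, ← ENNReal.toReal_rpow, ← Real.rpow_natCast, ← Real.rpow_natCast,
      ← Real.rpow_mul (by simp), ← Real.rpow_mul (by norm_num), mul_comm]
    simp
  rw [← hpow]
  refine ENNReal.toReal_mono ?_ ((measure_mono inter_subset_right).trans (hμ.dyadicBall_le (x, n)))
  exact ENNReal.pow_ne_top (ENNReal.rpow_ne_top_of_ne_zero (by simp) (by simp))

lemma exists_mul_mass_iUnion_le (hμ : IsFrostmanContent s c μ) {P : ℕ → Set X} (hP : Monotone P) :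
    ∃ N, c * mass μ (⋃ n, P n) ≤ mass μ (P N) := by
  obtain ⟨N, hN⟩ := hμ.exists_mul_iUnion_le hP
  exact ⟨N, by simpa [mass] using ENNReal.toReal_mono (measure_ne_top_of_univ
    hμ.measure_univ_ne_top) hN⟩

end IsFrostmanContent

end Mass

section GreedyRemoval

variable {X : Type*}

/-- What is left of `P` after `n` rounds, each of which removes from the current set `Z` the part
`rm Z`. -/
def residual (rm : Set X → Set X) (P : Set X) : ℕ → Set X
  | 0 => P
  | n + 1 => residual rm P n \ rm (residual rm P n)

variable {rm : Set X → Set X} {P : Set X} {μ : OuterMeasure X}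

lemma antitone_residual : Antitone (residual rm P) :=
  antitone_nat_of_succ_le fun _ => sdiff_subset

lemma residual_subset (n : ℕ) : residual rm P n ⊆ P := antitone_residual (Nat.zero_le n)

lemma subset_iInter_residual_union :
    P ⊆ (⋂ n, residual rm P n) ∪ ⋃ n, residual rm P n ∩ rm (residual rm P n) := by
  intro x hx
  by_cases hrm : ∃ n, x ∈ residual rm P n ∩ rm (residual rm P n)
  · exact Or.inr (mem_iUnion.2 hrm)
  · refine Or.inl (mem_iInter.2 fun n => ?_)
    induction n with
    | zero => exact hx
    | succ n ih => exact ⟨ih, fun hxn => hrm ⟨n, ih, hxn⟩⟩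

lemma measure_le_tsum_residual
    (h : ∀ Y ⊆ P, μ Y ≠ 0 → ∃ ε ≠ 0, ∀ Z, Y ⊆ Z → Z ⊆ P → ε ≤ μ (Z ∩ rm Z)) :
    μ P ≤ ∑' n, μ (residual rm P n ∩ rm (residual rm P n)) := by
  by_cases hnull : μ (⋂ n, residual rm P n) = 0
  · calc μ P ≤ μ ((⋂ n, residual rm P n) ∪ ⋃ n, residual rm P n ∩ rm (residual rm P n)) :=
        measure_mono subset_iInter_residual_union
      _ ≤ 0 + ∑' n, μ (residual rm P n ∩ rm (residual rm P n)) :=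
        (measure_union_le _ _).trans (add_le_add hnull.le (measure_iUnion_le _))
      _ = _ := zero_add _
  · obtain ⟨ε, hε, hle⟩ := h _ (iInter_subset_of_subset 0 (residual_subset 0)) hnull
    refine le_top.trans ?_
    rw [← ENNReal.tsum_const_eq_top_of_ne_zero (α := ℕ) hε]
    exact ENNReal.tsum_le_tsum fun n => hle _ (iInter_subset _ n) (residual_subset n)

lemma exists_finset_half_mass_le_sum_residual (hμ : μ univ ≠ ⊤) (hP : 0 < mass μ P)
    (h : ∀ Y ⊆ P, 0 < mass μ Y → ∃ ε > 0, ∀ Z, Y ⊆ Z → Z ⊆ P → ε ≤ mass μ (Z ∩ rm Z)) :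
    ∃ F : Finset ℕ, (∀ n ∈ F, 0 < mass μ (residual rm P n)) ∧
      mass μ P / 2 ≤ ∑ n ∈ F, mass μ (residual rm P n ∩ rm (residual rm P n)) := by
  have htsum : μ P ≤ ∑' n, μ (residual rm P n ∩ rm (residual rm P n)) := by
    refine measure_le_tsum_residual fun Y hY hY0 => ?_
    obtain ⟨ε, hε, hle⟩ := h Y hY ((mass_pos_iff hμ).2 hY0)
    exact ⟨ENNReal.ofReal ε, (ENNReal.ofReal_pos.2 hε).ne', fun Z hYZ hZP =>
      (ENNReal.ofReal_le_iff_le_toReal (measure_ne_top_of_univ hμ)).2 (hle Z hYZ hZP)⟩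
  have hhalf : μ P / 2 < ∑' n, μ (residual rm P n ∩ rm (residual rm P n)) :=
    (ENNReal.half_lt_self ((mass_pos_iff hμ).1 hP) (measure_ne_top_of_univ hμ)).trans_le htsum
  rw [ENNReal.tsum_eq_iSup_sum, lt_iSup_iff] at hhalf
  obtain ⟨F, hF⟩ := hhalf
  refine ⟨F.filter fun n => 0 < mass μ (residual rm P n),
    fun n hn => (Finset.mem_filter.1 hn).2, ?_⟩
  rw [Finset.sum_filter_of_ne fun n _ hn =>
    (mass_nonneg.lt_of_ne' hn).trans_le (mass_mono hμ inter_subset_left)]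
  have hfin : ∀ n ∈ F, μ (residual rm P n ∩ rm (residual rm P n)) ≠ ⊤ := fun _ _ =>
    measure_ne_top_of_univ hμ
  calc mass μ P / 2 = (μ P / 2).toReal := by simp [mass]
    _ ≤ (∑ n ∈ F, μ (residual rm P n ∩ rm (residual rm P n))).toReal :=
      ENNReal.toReal_mono (ENNReal.sum_ne_top.2 hfin) hF.le
    _ = _ := ENNReal.toReal_sum hfin

lemma mass_sub_le_mass_residual (hμ : μ univ ≠ ⊤) {M : ℝ} {N : ℕ}
    (hM : ∀ n < N, mass μ (residual rm P n ∩ rm (residual rm P n)) ≤ M) :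
    mass μ P - N * M ≤ mass μ (residual rm P N) := by
  induction N with
  | zero => simp [residual]
  | succ N ih =>
    have hN := ih fun n hn => hM n (hn.trans N.lt_succ_self)
    have hsplit := mass_le_inter_add_sdiff (μ := μ) (E := residual rm P N)
      (F := rm (residual rm P N)) hμ
    have hlast := hM N N.lt_succ_self
    rw [residual]
    push_cast
    linarith

lemma le_dist_of_mem_residual [MetricSpace X] {x : Set X → X} {R : Set X → ℝ} {d : ℝ} {i j : ℕ}
    {a b : X} (hij : i < j) (hrm : rm = fun Z => closedBall (x Z) (R Z))
    (ha : a ∈ closedBall (x (residual rm P i)) (R (residual rm P i) - d))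
    (hb : b ∈ residual rm P j) : d ≤ dist a b := by
  have hnot : b ∉ rm (residual rm P i) := (antitone_residual (Nat.succ_le_of_lt hij) hb).2
  simp only [hrm, mem_closedBall, not_le] at hnot ha
  linarith [dist_triangle_left b (x (residual (fun Z => closedBall (x Z) (R Z)) P i)) a]

end GreedyRemoval

section Exponents

/-- Exponents for which a set of mass at least `ℓ ^ κ` whose balls of radius `ℓ` have mass at most
`ℓ ^ s` can be subdivided without losing `k`-dimensional size. -/
structure SplittingExponents (s k κ θ β T : ℝ) : Prop where
  k_pos : 0 < k
  k_lt : k < κ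
  lt_s : κ < s
  θ_pos : 0 < θ
  θ_lt_one : θ < 1
  β_pos : 0 < β
  β_lt_one : β < 1
  sub_lt_mul : κ - k < s * β
  mul_mul_eq : κ * θ * (1 - β) = k
  two_le : 2 ≤ T
  two_le_mul : 2 ≤ T * β

lemma exists_splittingExponents {s k : ℝ} (hk : 0 < k) (hks : k < s) :
    ∃ κ θ β T, SplittingExponents s k κ θ β T := by
  obtain ⟨κ, hkκ, hκs⟩ := exists_between hks
  have hκ : 0 < κ := hk.trans hkκ
  have hs : 0 < s := hκ.trans hκs
  have hsub : 0 < κ - k := sub_pos.2 hkκ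
  obtain ⟨β, hβs, hβκ⟩ := exists_between (div_lt_div_of_pos_left hsub hκ hκs)
  have hβ : 0 < β := (div_pos hsub hs).trans hβs
  have hβκ' : β * κ < κ - k := (lt_div_iff₀ hκ).1 hβκ
  have hβ1 : 0 < 1 - β := by
    have : 0 < κ * (1 - β) := by linarith
    exact (mul_pos_iff_of_pos_left hκ).1 this
  refine ⟨κ, k / (κ * (1 - β)), β, max 2 (2 / β), hk, hkκ, hκs, by positivity, ?_, hβ, by linarith,
    (div_lt_iff₀' hs).1 hβs, by field_simp, le_max_left _ _, ?_⟩
  · rw [div_lt_one (by positivity)]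
    linarith
  · exact (div_le_iff₀ hβ).1 (le_max_right _ _)

variable {s k κ θ β T : ℝ}

lemma SplittingExponents.κ_pos (h : SplittingExponents s k κ θ β T) : 0 < κ :=
  h.k_pos.trans h.k_lt

/-- The power of the scale gained by the ball bounds of admissible sets. -/
noncomputable def splittingGain (s k κ β : ℝ) : ℝ := min (min (s - κ) (k + s * β - κ)) κ

lemma SplittingExponents.gain_pos (h : SplittingExponents s k κ θ β T) :
    0 < splittingGain s k κ β :=
  lt_min (lt_min (sub_pos.2 h.lt_s) (by linarith [h.sub_lt_mul])) h.κ_pos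

/-- `M` is small enough, as a bound for the mass of balls of radius `ℓ` in a set of mass `u`:
the first two inequalities give many separated balls, the last one makes those balls fill
`k`-dimensional size. The factor `ε` is a gain that absorbs constants at small scales. -/
structure IsBallBound (k κ β ε ℓ u M : ℝ) : Prop where
  pos : 0 < M
  le_mul_mass : M ≤ ε * u
  le_mul_rpow : M ≤ ε * ℓ ^ κ
  rpow_le : ℓ ^ k ≤ ε * u * M ^ (-β)

lemma isBallBound_of_massive {ℓ u : ℝ} (hℓ : 0 < ℓ) (hℓ1 : ℓ ≤ 1) (hu : ℓ ^ κ ≤ u) :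
    IsBallBound k κ β (ℓ ^ splittingGain s k κ β) ℓ u (ℓ ^ s) := by
  have hle : ℓ ^ s ≤ ℓ ^ splittingGain s k κ β * ℓ ^ κ := by
    rw [← Real.rpow_add hℓ]
    have hgain : splittingGain s k κ β ≤ s - κ := (min_le_left _ _).trans (min_le_left _ _)
    exact Real.rpow_le_rpow_of_exponent_ge hℓ hℓ1 (by linarith)
  refine ⟨by positivity, hle.trans (by gcongr), hle, ?_⟩
  calc ℓ ^ k ≤ ℓ ^ (splittingGain s k κ β + κ + s * -β) := by
        have hgain : splittingGain s k κ β ≤ k + s * β - κ :=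
          (min_le_left _ _).trans (min_le_right _ _)
        exact Real.rpow_le_rpow_of_exponent_ge hℓ hℓ1 (by linarith)
    _ = ℓ ^ splittingGain s k κ β * ℓ ^ κ * (ℓ ^ s) ^ (-β) := by
        rw [Real.rpow_add hℓ, Real.rpow_add hℓ, Real.rpow_mul hℓ.le]
    _ ≤ ℓ ^ splittingGain s k κ β * u * (ℓ ^ s) ^ (-β) := by gcongr

lemma isBallBound_of_scattered {ℓ u : ℝ} (h : SplittingExponents s k κ θ β T) (hℓ : 0 < ℓ)
    (hℓ1 : ℓ ≤ 1) (hu : 0 < u) (huℓ : u ≤ ℓ ^ κ) :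
    IsBallBound k κ β (ℓ ^ splittingGain s k κ β) ℓ u (u ^ T) := by
  have hgain : ℓ ^ κ ≤ ℓ ^ splittingGain s k κ β :=
    Real.rpow_le_rpow_of_exponent_ge hℓ hℓ1 (min_le_right _ _)
  have hu1 : u ≤ 1 := huℓ.trans (Real.rpow_le_one hℓ.le hℓ1 h.κ_pos.le)
  have huT : u ^ T ≤ u * u := by
    rw [← pow_two, ← Real.rpow_two]
    exact Real.rpow_le_rpow_of_exponent_ge hu hu1 h.two_le
  have huβ : (u * u)⁻¹ ≤ (u ^ T) ^ (-β) := by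
    rw [← pow_two, ← Real.rpow_two, ← Real.rpow_neg hu.le, ← Real.rpow_mul hu.le]
    exact Real.rpow_le_rpow_of_exponent_ge hu hu1 (by linarith [h.two_le_mul])
  refine ⟨by positivity, huT.trans ?_, huT.trans ?_, ?_⟩
  · exact mul_le_mul_of_nonneg_right (huℓ.trans hgain) hu.le
  · exact mul_le_mul (huℓ.trans hgain) huℓ hu.le (by positivity)
  calc ℓ ^ k ≤ 1 := Real.rpow_le_one hℓ.le hℓ1 h.k_pos.le
    _ = u * u * (u * u)⁻¹ := (mul_inv_cancel₀ (by positivity)).symm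
    _ ≤ ℓ ^ splittingGain s k κ β * u * (u ^ T) ^ (-β) := by gcongr; exact huℓ.trans hgain

namespace IsBallBound

variable {k : ℕ} {ε ℓ u m M c : ℝ}

lemma mul_le_quarter_mass (h : IsBallBound k κ β ε ℓ u M) (hm : c * u ≤ m) (hu : 0 < u)
    (hε : 4 * 8 ^ k * ε ≤ c) : 8 ^ k * M ≤ m / 4 := by
  have : 4 * 8 ^ k * ε * u ≤ c * u := by gcongr
  have : 8 ^ k * M ≤ 8 ^ k * (ε * u) := by gcongr; exact h.le_mul_mass
  linarith

lemma two_mul_pow_le (h : IsBallBound k κ β ε ℓ u M) (hm : c * u ≤ m) (hu : 0 < u) (hε0 : 0 ≤ ε)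
    (hε : 4 * 8 ^ k * ε ≤ c) : (2 * ℓ) ^ k ≤ m / 4 * M ^ (-β) := by
  have hM : 0 ≤ M ^ (-β) := Real.rpow_nonneg h.pos.le _
  have hεm : 2 ^ k * (ε * u) ≤ m / 4 := by
    have h28 : (2 : ℝ) ^ k * (ε * u) ≤ 8 ^ k * (ε * u) := by gcongr; norm_num
    have : 4 * 8 ^ k * ε * u ≤ c * u := by gcongr
    linarith
  calc (2 * ℓ) ^ k = 2 ^ k * ℓ ^ (k : ℝ) := by rw [mul_pow, Real.rpow_natCast]
    _ ≤ 2 ^ k * (ε * u * M ^ (-β)) := by gcongr; exact h.rpow_le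
    _ = 2 ^ k * (ε * u) * M ^ (-β) := (mul_assoc _ _ _).symm
    _ ≤ m / 4 * M ^ (-β) := by gcongr

lemma le_div_four_rpow {k ε ℓ u M : ℝ} (h : IsBallBound k κ β ε ℓ u M) (hℓ : 0 ≤ ℓ)
    (hε : ε ≤ (1 / 4) ^ κ) : M ≤ (ℓ / 4) ^ κ := by
  rw [div_eq_mul_one_div, Real.mul_rpow hℓ (by norm_num), mul_comm]
  exact h.le_mul_rpow.trans (by gcongr)

end IsBallBound

end Exponents

section Splitting

variable {X : Type*} [MetricSpace X] {μ : OuterMeasure X} {T ℓ : ℝ} {P Q : Set X}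

/-- Every ball of radius `ℓ` centred in `P` carries only a small power of the mass of `P`. -/
def IsScattered (μ : OuterMeasure X) (T ℓ : ℝ) (P : Set X) : Prop :=
  ∀ x ∈ P, mass μ (P ∩ closedBall x ℓ) ≤ mass μ P ^ T

/-- The invariant of the tree construction at scale `ℓ`: a set of positive mass that is massive or
scattered, so that its mass is spread over many balls of radius `ℓ`. -/
structure IsAdmissible (μ : OuterMeasure X) (κ T ℓ : ℝ) (P : Set X) : Prop where
  mass_pos : 0 < mass μ P
  massive_or_scattered : ℓ ^ κ ≤ mass μ P ∨ IsScattered μ T ℓ P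

/-- `P` has a positive part inside a ball of radius `ℓ / 2` that is scattered at scale `ℓ / 8`. -/
def HasScatteredPart (μ : OuterMeasure X) (T ℓ : ℝ) (P : Set X) : Prop :=
  ∃ x ∈ P, ∃ S ⊆ P ∩ closedBall x (ℓ / 2), 0 < mass μ S ∧ IsScattered μ T (ℓ / 8) S

lemma HasScatteredPart.mono (h : HasScatteredPart μ T ℓ Q) (hQP : Q ⊆ P) :
    HasScatteredPart μ T ℓ P := by
  obtain ⟨x, hx, S, hS, hS'⟩ := h
  exact ⟨x, hQP hx, S, hS.trans (inter_subset_inter_left _ hQP), hS'⟩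

/-- Finitely many admissible subsets `Q i` of `P`, at dyadic levels `lev i` finer than `n`, that are
separated at scale `(1 / 2) ^ n` and together keep the `k`-dimensional size of level `n`. -/
structure IsRefinement (μ : OuterMeasure X) (κ T δ : ℝ) (k n : ℕ) (P : Set X) (F : Finset ℕ)
    (Q : ℕ → Set X) (lev : ℕ → ℕ) : Prop where
  subset : ∀ i ∈ F, Q i ⊆ P
  lt_level : ∀ i ∈ F, n < lev i
  admissible : ∀ i ∈ F, IsAdmissible μ κ T ((1 / 2) ^ lev i) (Q i)
  le_dist : ∀ i ∈ F, ∀ j ∈ F, i < j → ∀ x ∈ Q i, ∀ y ∈ Q j, δ * (1 / 2) ^ n ≤ dist x y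
  le_sum : ((1 / 2 : ℝ) ^ n) ^ k ≤ ∑ i ∈ F, ((1 / 2 : ℝ) ^ lev i) ^ k

lemma IsAdmissible.exists_isBallBound {s k κ θ β : ℝ} (h : SplittingExponents s k κ θ β T)
    (hP : IsAdmissible μ κ T ℓ P) (hℓ : 0 < ℓ) (hℓ1 : ℓ ≤ 1)
    (hball : ∀ x, mass μ (P ∩ closedBall x ℓ) ≤ ℓ ^ s) :
    ∃ M, IsBallBound k κ β (ℓ ^ splittingGain s k κ β) ℓ (mass μ P) M ∧
      ∀ x ∈ P, mass μ (P ∩ closedBall x ℓ) ≤ M := by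
  by_cases hmassive : ℓ ^ κ ≤ mass μ P
  · exact ⟨_, isBallBound_of_massive hℓ hℓ1 hmassive, fun x _ => hball x⟩
  · exact ⟨_, isBallBound_of_scattered h hℓ hℓ1 hP.mass_pos (not_le.1 hmassive).le,
      hP.massive_or_scattered.resolve_left hmassive⟩

lemma half_mass_le_mass_residual (hμ : μ univ ≠ ⊤) {x : Set X → X} {r M : ℝ} {N i : ℕ}
    (hM : ∀ y ∈ P, mass μ (P ∩ closedBall y r) ≤ M) (hM0 : 0 ≤ M) (hN : N * M ≤ mass μ P / 2)
    (hx : ∀ Y ⊆ P, mass μ P / 2 ≤ mass μ Y → x Y ∈ Y) (hi : i ≤ N) :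
    mass μ P / 2 ≤ mass μ (residual (fun Y => closedBall (x Y) r) P i) := by
  induction i using Nat.strong_induction_on with
  | _ i ih =>
    have hstage := mass_sub_le_mass_residual (P := P) (N := i) hμ (M := M)
      (rm := fun Y => closedBall (x Y) r) fun j hj =>
        (mass_mono hμ (inter_subset_inter_left _ (residual_subset j))).trans
          (hM _ (residual_subset j (hx _ (residual_subset j) (ih j hj (hj.le.trans hi)))))
    have : (i : ℝ) * M ≤ N * M := by gcongr
    linarith

lemma exists_isRefinement_of_hasScatteredPart (hμ : μ univ ≠ ⊤) {κ M δ : ℝ} {k n : ℕ}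
    (hδ : δ ≤ 1 / 2) (hM : ∀ x ∈ P, mass μ (P ∩ closedBall x ((1 / 2) ^ n)) ≤ M) (hM0 : 0 ≤ M)
    (hcard : 8 ^ k * M ≤ mass μ P / 2)
    (h : ∀ Y ⊆ P, mass μ P / 2 ≤ mass μ Y → HasScatteredPart μ T ((1 / 2) ^ n) Y) :
    ∃ F Q lev, IsRefinement μ κ T δ k n P F Q lev := by
  obtain ⟨x₀, -⟩ := h P Subset.rfl (half_le_self mass_nonneg)
  have : Nonempty X := ⟨x₀⟩
  choose! x hx S hS hS0 hscat using h
  set Z := residual (fun Y => closedBall (x Y) ((1 / 2) ^ n)) P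
  have hmem : ∀ i ∈ Finset.range (8 ^ k), mass μ P / 2 ≤ mass μ (Z i) := fun i hi =>
    half_mass_le_mass_residual hμ hM hM0 (by exact_mod_cast hcard) hx (Finset.mem_range.1 hi).le
  refine ⟨Finset.range (8 ^ k), fun i => S (Z i), fun _ => n + 3, fun i hi => ?_,
    fun _ _ => by simp,
    fun i hi => ⟨hS0 _ (residual_subset i) (hmem i hi), Or.inr ?_⟩, ?_, le_of_eq ?_⟩
  · exact (hS _ (residual_subset i) (hmem i hi)).trans
      (inter_subset_left.trans (residual_subset i))
  · rw [pow_add, show ((1 / 2 : ℝ) ^ 3) = 1 / 8 by norm_num, mul_one_div]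
    exact hscat _ (residual_subset i) (hmem i hi)
  · intro i hi j hj hij a ha b hb
    have hdist := le_dist_of_mem_residual hij rfl
      (closedBall_subset_closedBall (by linarith) (hS _ (residual_subset i) (hmem i hi) ha).2)
      (hS _ (residual_subset j) (hmem j hj) hb).1 (d := (1 / 2) ^ n / 2)
    calc δ * (1 / 2) ^ n ≤ 1 / 2 * (1 / 2) ^ n := by gcongr
      _ = (1 / 2) ^ n / 2 := by ring
      _ ≤ dist a b := hdist
  · rw [Finset.sum_const, Finset.card_range, nsmul_eq_mul, pow_add, mul_pow, mul_left_comm]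
    push_cast
    rw [← mul_pow]
    norm_num

end Splitting

section SlowBalls

lemma exists_lt_le_rpow_succ {D : ℕ} {T θ : ℝ} {a : ℕ → ℝ} (hT : 0 ≤ T) (hθ : 0 < θ)
    (hD : 2 * T ≤ θ⁻¹ ^ D) (ha : ∀ i, 0 ≤ a i) (ha0 : a 0 ≤ 1 / 2) (hlast : (a 0 / 2) ^ T < a D) :
    ∃ i < D, a i ≤ a (i + 1) ^ θ := by
  by_contra! hlt
  have hiter : ∀ i ≤ D, a i ≤ a 0 ^ θ⁻¹ ^ i := by
    intro i
    induction i with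
    | zero => simp
    | succ i ih =>
      intro hi
      calc a (i + 1) ≤ a i ^ θ⁻¹ :=
            (Real.le_rpow_inv_iff_of_pos (ha _) (ha _) hθ).2 (hlt i hi).le
        _ ≤ (a 0 ^ θ⁻¹ ^ i) ^ θ⁻¹ :=
            Real.rpow_le_rpow (ha i) (ih (i.le_succ.trans hi)) (inv_nonneg.2 hθ.le)
        _ = a 0 ^ θ⁻¹ ^ (i + 1) := by rw [← Real.rpow_mul (ha 0), pow_succ]
  refine hlast.not_ge ?_
  calc a D ≤ a 0 ^ θ⁻¹ ^ D := hiter D le_rfl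
    _ ≤ a 0 ^ (2 * T) := Real.rpow_le_rpow_of_exponent_ge' (ha 0) (by linarith) (by linarith) hD
    _ = (a 0 * a 0) ^ T := by rw [Real.rpow_mul (ha 0), Real.rpow_two, pow_two]
    _ ≤ (a 0 / 2) ^ T := by
      refine Real.rpow_le_rpow (mul_self_nonneg _) ?_ hT
      rw [div_eq_mul_one_div]
      exact mul_le_mul_of_nonneg_left ha0 (ha 0)

lemma exists_pos_forall_le_two_mul {α : Type*} {g : α → ℝ} {Z : Set α} (hg : BddAbove (g '' Z))
    (hpos : ∃ x ∈ Z, 0 < g x) : ∃ x ∈ Z, 0 < g x ∧ ∀ y ∈ Z, g y ≤ 2 * g x := by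
  obtain ⟨z, hz, hgz⟩ := hpos
  have hle : ∀ y ∈ Z, g y ≤ sSup (g '' Z) := fun y hy => le_csSup hg (mem_image_of_mem g hy)
  have hsup : 0 < sSup (g '' Z) := hgz.trans_le (hle z hz)
  obtain ⟨_, ⟨x, hx, rfl⟩, hgx⟩ :=
    exists_lt_of_lt_csSup ⟨g z, mem_image_of_mem g hz⟩ (half_lt_self hsup)
  exact ⟨x, hx, (half_pos hsup).trans hgx, fun y hy => by linarith [hle y hy]⟩

variable {X : Type*} [MetricSpace X] {μ : OuterMeasure X} {T θ ℓ d : ℝ} {Z : Set X}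

lemma exists_mem_mass_inter_closedBall_pos [SecondCountableTopology X] (hμ : μ univ ≠ ⊤)
    (hZ : 0 < mass μ Z) {r : ℝ} (hr : 0 < r) : ∃ x ∈ Z, 0 < mass μ (Z ∩ closedBall x r) := by
  obtain ⟨x, hx, hpos⟩ := exists_mem_forall_mem_nhdsWithin_pos_measure ((mass_pos_iff hμ).1 hZ)
  exact ⟨x, hx, (mass_pos_iff hμ).2
    (hpos _ (inter_mem self_mem_nhdsWithin (mem_nhdsWithin_of_mem_nhds
      (closedBall_mem_nhds x hr)))).ne'⟩

/-- A ball of radius `ρ ≤ ℓ / 2` about a point of `Z` in which the mass of `Z` grows slowly over the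
last `d` of the radius, and which removes a fixed proportion (up to the power `T`) of the mass of
`Z` in any ball of radius `ℓ / 2`. -/
structure IsSlowBall (μ : OuterMeasure X) (T θ ℓ d : ℝ) (Z : Set X) (x : X) (ρ : ℝ) : Prop where
  mem : x ∈ Z
  radius_le : ρ ≤ ℓ / 2
  mass_inner_pos : 0 < mass μ (Z ∩ closedBall x (ρ - d))
  mass_le_rpow : mass μ (Z ∩ closedBall x ρ) ≤ mass μ (Z ∩ closedBall x (ρ - d)) ^ θ
  half_rpow_le : ∀ y ∈ Z,
    (mass μ (Z ∩ closedBall y (ℓ / 2)) / 2) ^ T ≤ mass μ (Z ∩ closedBall x ρ)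

lemma exists_isSlowBall [SecondCountableTopology X] (hμ : μ univ ≠ ⊤) {D : ℕ} (hT : 0 ≤ T)
    (hθ : 0 < θ) (hD : 2 * T ≤ θ⁻¹ ^ D) (hℓ : 0 < ℓ) (hd : 0 ≤ d) (hDd : D * d ≤ 3 / 8 * ℓ)
    (hZ : 0 < mass μ Z) (hhalf : ∀ x ∈ Z, mass μ (Z ∩ closedBall x (ℓ / 2)) ≤ 1 / 2)
    (hscat : ¬ HasScatteredPart μ T ℓ Z) : ∃ x ρ, IsSlowBall μ T θ ℓ d Z x ρ := by
  obtain ⟨x, hx, hxpos, hxmax⟩ := exists_pos_forall_le_two_mul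
    (g := fun x => mass μ (Z ∩ closedBall x (ℓ / 2))) ⟨1 / 2, forall_mem_image.2 hhalf⟩
    (exists_mem_mass_inter_closedBall_pos hμ hZ (half_pos hℓ))
  obtain ⟨x', hx', hlt⟩ : ∃ x' ∈ Z ∩ closedBall x (ℓ / 2), mass μ (Z ∩ closedBall x (ℓ / 2)) ^ T <
      mass μ (Z ∩ closedBall x (ℓ / 2) ∩ closedBall x' (ℓ / 8)) := by
    by_contra! hle
    exact hscat ⟨x, hx, _, Subset.rfl, hxpos, hle⟩
  set a : ℕ → ℝ := fun i => mass μ (Z ∩ closedBall x' (ℓ / 2 - i * d)) with ha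
  have hanti : Antitone a := fun i j hij =>
    mass_mono hμ (inter_subset_inter_right _ (closedBall_subset_closedBall (by gcongr)))
  have haD : mass μ (Z ∩ closedBall x (ℓ / 2)) ^ T < a D :=
    hlt.trans_le (mass_mono hμ (inter_subset_inter inter_subset_left
      (closedBall_subset_closedBall (by linarith))))
  have hmax : ∀ y ∈ Z, (mass μ (Z ∩ closedBall y (ℓ / 2)) / 2) ^ T < a D := fun y hy =>
    (Real.rpow_le_rpow (div_nonneg mass_nonneg zero_le_two)
      (by linarith [hxmax y hy]) hT).trans_lt haD
  have ha0 : a 0 = mass μ (Z ∩ closedBall x' (ℓ / 2)) := by simp [ha]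
  obtain ⟨i, hi, hslow⟩ := exists_lt_le_rpow_succ (a := a) hT hθ hD (fun _ => mass_nonneg)
    (ha0.trans_le (hhalf x' hx'.1)) (by simpa only [ha0] using hmax x' hx'.1)
  have hnext : mass μ (Z ∩ closedBall x' (ℓ / 2 - i * d - d)) = a (i + 1) := by
    simp only [ha, Nat.cast_add_one, add_one_mul, sub_sub]
  refine ⟨x', ℓ / 2 - i * d, hx'.1, sub_le_self _ (by positivity), ?_, ?_,
    fun y hy => (hmax y hy).le.trans (hanti hi.le)⟩
  · exact hnext ▸ ((Real.rpow_nonneg mass_nonneg T).trans_lt haD).trans_le (hanti hi)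
  · exact hnext ▸ hslow

end SlowBalls

section Refinement

lemma exists_dyadic_level {κ q : ℝ} {n : ℕ} (hκ : 0 < κ) (hq : 0 < q)
    (h : q ≤ ((1 / 2) ^ n / 4) ^ κ) :
    ∃ l, n < l ∧ ((1 / 2 : ℝ) ^ l) ^ κ ≤ q ∧ q ^ κ⁻¹ ≤ 2 * (1 / 2) ^ l := by
  have hn : (0 : ℝ) < (1 / 2) ^ n := by positivity
  have hle : q ^ κ⁻¹ ≤ (1 / 2) ^ n / 4 :=
    (Real.rpow_inv_le_iff_of_pos hq.le (by positivity) hκ).2 h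
  have hn1 : (1 / 2 : ℝ) ^ n ≤ 1 := pow_le_one₀ (by norm_num) (by norm_num)
  obtain ⟨l, hl, hl'⟩ := exists_nat_pow_near_of_lt_one (Real.rpow_pos_of_pos hq κ⁻¹)
    (by linarith) one_half_pos one_half_lt_one
  refine ⟨l + 1, ?_, (Real.le_rpow_inv_iff_of_pos (by positivity) hq.le hκ).1 hl.le, ?_⟩
  · have : (1 / 2 : ℝ) ^ (l + 1) < (1 / 2) ^ n := by linarith
    exact (pow_lt_pow_iff_right_of_lt_one₀ one_half_pos one_half_lt_one).1 this
  · rw [pow_succ]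
    linarith

lemma mul_rpow_neg_le_pow {s κ θ β T a q M r : ℝ} {k : ℕ} (h : SplittingExponents s k κ θ β T)
    (ha : 0 < a) (haM : a ≤ M) (hq : 0 ≤ q) (haq : a ≤ q ^ θ) (hqr : q ^ κ⁻¹ ≤ r) :
    a * M ^ (-β) ≤ r ^ k := by
  have hexp : κ⁻¹ * k = θ * (1 - β) := by
    rw [← h.mul_mul_eq, mul_assoc, inv_mul_cancel_left₀ h.κ_pos.ne']
  calc a * M ^ (-β) ≤ a * a ^ (-β) := mul_le_mul_of_nonneg_left
        (Real.rpow_le_rpow_of_nonpos ha haM (neg_nonpos.2 h.β_pos.le)) ha.le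
    _ = a ^ (1 - β) := by rw [sub_eq_add_neg, Real.rpow_add ha, Real.rpow_one]
    _ ≤ (q ^ θ) ^ (1 - β) := Real.rpow_le_rpow ha.le haq (sub_nonneg.2 h.β_lt_one.le)
    _ = (q ^ κ⁻¹) ^ k := by
        rw [← Real.rpow_mul hq, ← hexp, Real.rpow_mul hq, Real.rpow_natCast]
    _ ≤ r ^ k := pow_le_pow_left₀ (Real.rpow_nonneg hq _) hqr k

variable {X : Type*} [MetricSpace X] {μ : OuterMeasure X} {s κ θ β T : ℝ} {k n : ℕ}
  {P : Set X}

lemma exists_isRefinement_of_isSlowBall (hμ : μ univ ≠ ⊤) (h : SplittingExponents s k κ θ β T)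
    {δ M : ℝ} {F : Finset ℕ} {x : Set X → X} {ρ : Set X → ℝ} {rm : Set X → Set X} (hδ : 0 ≤ δ)
    (hrm : rm = fun Z => closedBall (x Z) (ρ Z))
    (hslow : ∀ i ∈ F, IsSlowBall μ T θ ((1 / 2) ^ n) (δ * (1 / 2) ^ n) (residual rm P i)
      (x (residual rm P i)) (ρ (residual rm P i)))
    (hM : ∀ i ∈ F, mass μ (residual rm P i ∩ rm (residual rm P i)) ≤ M)
    (hMκ : M ≤ ((1 / 2) ^ n / 4) ^ κ)
    (hsize : (2 * (1 / 2) ^ n) ^ k ≤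
      ∑ i ∈ F, mass μ (residual rm P i ∩ rm (residual rm P i)) * M ^ (-β)) :
    ∃ Q lev, IsRefinement μ κ T δ k n P F Q lev := by
  set Z := residual rm P
  set Q : ℕ → Set X := fun i =>
    Z i ∩ closedBall (x (Z i)) (ρ (Z i) - δ * (1 / 2) ^ n)
  have hQZ : ∀ i, mass μ (Q i) ≤ mass μ (Z i ∩ rm (Z i)) := fun i =>
    mass_mono hμ (inter_subset_inter_right _ (hrm ▸ closedBall_subset_closedBall
      (sub_le_self _ (by positivity))))
  have hQpos : ∀ i ∈ F, 0 < mass μ (Q i) := fun i hi => (hslow i hi).mass_inner_pos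
  choose! lev hlt hle hge using fun i hi =>
    exists_dyadic_level h.κ_pos (hQpos i hi) (((hQZ i).trans (hM i hi)).trans hMκ)
  refine ⟨Q, lev, fun i _ => inter_subset_left.trans (residual_subset i), hlt,
    fun i hi => ⟨hQpos i hi, Or.inl (hle i hi)⟩, fun i _ j _ hij a ha b hb =>
      le_dist_of_mem_residual hij hrm ha.2 hb.1, ?_⟩
  have hterm : ∀ i ∈ F, mass μ (Z i ∩ rm (Z i)) * M ^ (-β) ≤ (2 * (1 / 2) ^ lev i) ^ k := by
    refine fun i hi => mul_rpow_neg_le_pow h ((hQpos i hi).trans_le (hQZ i)) (hM i hi) mass_nonneg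
      ?_ (hge i hi)
    simpa only [hrm] using (hslow i hi).mass_le_rpow
  have hsum := hsize.trans (Finset.sum_le_sum hterm)
  simp only [mul_pow (2 : ℝ), ← Finset.mul_sum] at hsum
  exact le_of_mul_le_mul_left hsum (by positivity)

lemma exists_isRefinement_of_not_hasScatteredPart [SecondCountableTopology X] (hμ : μ univ ≠ ⊤)
    (h : SplittingExponents s k κ θ β T) {D : ℕ} (hD : 2 * T ≤ θ⁻¹ ^ D) {δ M : ℝ} (hδ : 0 ≤ δ)
    (hDδ : D * δ ≤ 3 / 8) (hP : 0 < mass μ P)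
    (hM : ∀ x ∈ P, mass μ (P ∩ closedBall x ((1 / 2) ^ n)) ≤ M) (hM0 : 0 ≤ M) (hM2 : M ≤ 1 / 2)
    (hMκ : M ≤ ((1 / 2) ^ n / 4) ^ κ)
    (hsize : (2 * (1 / 2) ^ n) ^ k ≤ mass μ P / 2 * M ^ (-β))
    (hscat : ¬ HasScatteredPart μ T ((1 / 2) ^ n) P) :
    ∃ F Q lev, IsRefinement μ κ T δ k n P F Q lev := by
  set ℓ : ℝ := (1 / 2) ^ n
  have hℓ : 0 < ℓ := by positivity
  have hT : 0 ≤ T := zero_le_two.trans h.two_le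
  have hball : ∀ Z ⊆ P, ∀ x ∈ Z, ∀ r ≤ ℓ / 2, mass μ (Z ∩ closedBall x r) ≤ M :=
    fun Z hZ x hx r hr => (mass_mono hμ (inter_subset_inter hZ
      (closedBall_subset_closedBall (by linarith)))).trans (hM x (hZ hx))
  have hslow : ∀ Z ⊆ P, 0 < mass μ Z → ∃ x ρ, IsSlowBall μ T θ ℓ (δ * ℓ) Z x ρ := by
    refine fun Z hZ hZ0 => exists_isSlowBall hμ hT h.θ_pos hD hℓ (by positivity) ?_ hZ0
      (fun x hx => (hball Z hZ x hx _ le_rfl).trans hM2) fun hZs => hscat (hZs.mono hZ)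
    rw [← mul_assoc]
    gcongr
  have : Nonempty X := ⟨(hslow P Subset.rfl hP).choose⟩
  choose! x ρ hslow using hslow
  set rm : Set X → Set X := fun Z => closedBall (x Z) (ρ Z) with hrm
  obtain ⟨F, hF, hsum⟩ := exists_finset_half_mass_le_sum_residual (rm := rm) hμ hP
    fun Y _ hY0 => by
      obtain ⟨y, hy, hpos⟩ := exists_mem_mass_inter_closedBall_pos hμ hY0 (half_pos hℓ)
      refine ⟨_, Real.rpow_pos_of_pos (half_pos hpos) T, fun Z hYZ hZ => le_trans ?_
        ((hslow Z hZ (hY0.trans_le (mass_mono hμ hYZ))).half_rpow_le y (hYZ hy))⟩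
      gcongr
      exact mass_mono hμ (inter_subset_inter_left _ hYZ)
  have hslowF i (hi : i ∈ F) := hslow _ (residual_subset i) (hF i hi)
  refine ⟨F, exists_isRefinement_of_isSlowBall hμ h hδ hrm hslowF (fun i hi => hball _
    (residual_subset i) _ (hslowF i hi).mem _ (hslowF i hi).radius_le) hMκ ?_⟩
  rw [← Finset.sum_mul]
  exact hsize.trans (by gcongr)

lemma eventually_splittingGain_small {c : ℝ} (h : SplittingExponents s k κ θ β T) (hc : 0 < c) :
    ∀ᶠ n : ℕ in atTop, 4 * 8 ^ k * ((1 / 2 : ℝ) ^ n) ^ splittingGain s k κ β ≤ c ∧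
      ((1 / 2 : ℝ) ^ n) ^ splittingGain s k κ β ≤ (1 / 4) ^ κ := by
  have hpow : Tendsto (fun n : ℕ => (1 / 2 : ℝ) ^ n) atTop (𝓝 0) :=
    tendsto_pow_atTop_nhds_zero_of_lt_one one_half_pos.le one_half_lt_one
  have hgain := hpow.rpow_const (p := splittingGain s k κ β) (Or.inr h.gain_pos.le)
  rw [Real.zero_rpow h.gain_pos.ne'] at hgain
  have hmul := hgain.const_mul (4 * 8 ^ k : ℝ)
  rw [mul_zero] at hmul
  exact (hmul.eventually_le_const hc).and (hgain.eventually_le_const (by positivity))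

lemma SplittingExponents.exists_chainLength_separation (h : SplittingExponents s k κ θ β T) :
    ∃ (D : ℕ) (δ : ℝ), 2 * T ≤ θ⁻¹ ^ D ∧ 0 < δ ∧ δ ≤ 1 / 2 ∧ D * δ ≤ 3 / 8 := by
  obtain ⟨D, hD⟩ := pow_unbounded_of_one_lt (2 * T) (one_lt_inv₀ h.θ_pos |>.2 h.θ_lt_one)
  have hD0 : 0 < (D : ℝ) := by
    rcases D.eq_zero_or_pos with rfl | hD0
    · linarith [h.two_le, pow_zero θ⁻¹]
    · exact_mod_cast hD0
  refine ⟨D, min (1 / 2) (3 / 8 / D), hD.le, by positivity, min_le_left _ _, ?_⟩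
  exact (le_div_iff₀' hD0).1 (min_le_right _ _)

theorem IsFrostmanContent.eventually_exists_isRefinement [SecondCountableTopology X] {c : ℝ≥0}
    (hμ : IsFrostmanContent s c μ) (hk : 0 < k) (hks : k < s) :
    ∃ κ T δ : ℝ, 0 < κ ∧ 0 < δ ∧ ∀ᶠ n in atTop, ∀ P P',
      IsAdmissible μ κ T ((1 / 2) ^ n) P → P' ⊆ P → c * mass μ P ≤ mass μ P' →
        ∃ F Q lev, IsRefinement μ κ T δ k n P' F Q lev := by
  obtain ⟨κ, θ, β, T, h⟩ := exists_splittingExponents (Nat.cast_pos.2 hk) hks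
  obtain ⟨D, δ, hD, hδ, hδ2, hDδ⟩ := h.exists_chainLength_separation
  refine ⟨κ, T, δ, h.κ_pos, hδ, ?_⟩
  filter_upwards [eventually_splittingGain_small h (NNReal.coe_pos.2 hμ.const_pos)]
    with n ⟨hc, hκ⟩ P P' hP hP' hmass
  have hℓ : (0 : ℝ) < (1 / 2) ^ n := by positivity
  obtain ⟨M, hM, hball⟩ := hP.exists_isBallBound h hℓ (pow_le_one₀ (by norm_num) (by norm_num))
    fun x => hμ.mass_inter_closedBall_le x n
  have hquarter := hM.mul_le_quarter_mass hmass hP.mass_pos hc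
  have hsize := hM.two_mul_pow_le hmass hP.mass_pos (by positivity) hc
  have hMκ := hM.le_div_four_rpow hℓ.le hκ
  have hP'pos : 0 < mass μ P' := (mul_pos hμ.const_pos hP.mass_pos).trans_le hmass
  have hball' Z (hZ : Z ⊆ P') : ∀ x ∈ Z, mass μ (Z ∩ closedBall x ((1 / 2) ^ n)) ≤ M := fun x hx =>
    (mass_mono hμ.measure_univ_ne_top (inter_subset_inter_left _ (hZ.trans hP'))).trans
      (hball x (hP' (hZ hx)))
  by_cases hscat : ∀ Y ⊆ P', mass μ P' / 2 ≤ mass μ Y → HasScatteredPart μ T ((1 / 2) ^ n) Y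
  · exact exists_isRefinement_of_hasScatteredPart hμ.measure_univ_ne_top hδ2
      (hball' P' Subset.rfl) hM.pos.le (by linarith) hscat
  · push Not at hscat
    obtain ⟨Y, hY, hYmass, hYscat⟩ := hscat
    have hM2 : M ≤ 1 / 2 := by
      have : 1 * M ≤ 8 ^ k * M := by gcongr; exacts [hM.pos.le, one_le_pow₀ (by norm_num)]
      linarith [hμ.mass_le_one (E := P')]
    obtain ⟨F, Q, lev, hQ⟩ := exists_isRefinement_of_not_hasScatteredPart hμ.measure_univ_ne_top h
      hD hδ.le hDδ ((half_pos hP'pos).trans_le hYmass) (hball' Y hY) hM.pos.le hM2 hMκ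
      (hsize.trans (mul_le_mul_of_nonneg_right (by linarith) (Real.rpow_nonneg hM.pos.le _))) hYscat
    exact ⟨F, Q, lev, { hQ with subset := fun i hi => (hQ.subset i hi).trans hY }⟩

end Refinement

section Kraft

variable {I ι : Type*} {d : I → ℕ} {w : I → ℕ → ι}

lemma exists_cylinders_cover_or_pairwiseDisjoint [Nonempty ι] (d : I → ℕ) (F : Finset I) :
    ∃ w : I → ℕ → ι, (∀ a, ∃ i ∈ F, a ∈ PiNat.cylinder (w i) (d i)) ∨
      (F : Set I).PairwiseDisjoint fun i => PiNat.cylinder (w i) (d i) := by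
  classical
  induction F using Finset.induction_on_max_value d with
  | empty => exact ⟨fun _ _ => Classical.arbitrary ι, Or.inr (by simp)⟩
  | insert i F hi hmax ih =>
    obtain ⟨w, hcover | hdisj⟩ := ih
    · refine ⟨w, Or.inl fun a => ?_⟩
      obtain ⟨j, hj, ha⟩ := hcover a
      exact ⟨j, Finset.mem_insert_of_mem hj, ha⟩
    by_cases hcover : ∀ a, ∃ j ∈ F, a ∈ PiNat.cylinder (w j) (d j)
    · refine ⟨w, Or.inl fun a => ?_⟩
      obtain ⟨j, hj, ha⟩ := hcover a
      exact ⟨j, Finset.mem_insert_of_mem hj, ha⟩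
    push Not at hcover
    obtain ⟨z, hz⟩ := hcover
    refine ⟨Function.update w i z, Or.inr ?_⟩
    have hw : ∀ j ∈ F, Function.update w i z j = w j := fun j hj =>
      Function.update_of_ne (ne_of_mem_of_not_mem hj hi) z w
    rw [Finset.coe_insert, pairwiseDisjoint_insert_of_notMem (by exact_mod_cast hi)]
    refine ⟨fun j hj j' hj' hne => ?_, fun j hj => disjoint_left.2 fun a ha ha' => hz j hj ?_⟩
    · simpa only [Function.onFun, hw j hj, hw j' hj'] using hdisj hj hj' hne
    · rw [Function.update_self] at ha
      rw [hw j hj] at ha'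
      exact fun l hl => (ha l (hl.trans_le (hmax j hj))).symm.trans (ha' l hl)

lemma card_words_with_prefix [Fintype ι] {m n : ℕ} (w : ℕ → ι) :
    (Fintype.piFinset fun l : Fin m => if (l : ℕ) < n then {w l} else Finset.univ).card =
      Fintype.card ι ^ (m - n) := by
  rw [Fintype.card_piFinset]
  simp only [apply_ite Finset.card, Finset.card_singleton, Finset.card_univ]
  rw [Fin.prod_univ_eq_prod_range (fun l => if l < n then 1 else Fintype.card ι) m,
    Finset.prod_ite, Finset.prod_const_one, one_mul, Finset.prod_const]
  congr 1
  have : (Finset.range m).filter (fun l => ¬ l < n) = Finset.Ico n m := by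
    ext l
    simp only [Finset.mem_filter, Finset.mem_range, Finset.mem_Ico]
    omega
  rw [this, Nat.card_Ico]

lemma cylinders_cover_of_pairwiseDisjoint [Fintype ι] [Nonempty ι] {F : Finset I}
    (hdisj : (F : Set I).PairwiseDisjoint fun i => PiNat.cylinder (w i) (d i))
    (hsum : 1 ≤ ∑ i ∈ F, (Fintype.card ι : ℝ)⁻¹ ^ d i) (a : ℕ → ι) :
    ∃ i ∈ F, a ∈ PiNat.cylinder (w i) (d i) := by
  classical
  set m := F.sup d
  set S : I → Finset (Fin m → ι) := fun i =>
    Fintype.piFinset fun l : Fin m => if (l : ℕ) < d i then {w i l} else Finset.univ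
  have hmem : ∀ i ∈ F, ∀ b : ℕ → ι, (fun l : Fin m => b l) ∈ S i ↔
      b ∈ PiNat.cylinder (w i) (d i) := by
    intro i hi b
    simp only [S, Fintype.mem_piFinset, PiNat.mem_cylinder_iff]
    refine ⟨fun h l hl => ?_, fun h l => ?_⟩
    · simpa [hl] using h ⟨l, hl.trans_le (Finset.le_sup hi)⟩
    · split_ifs with hl
      · exact Finset.mem_singleton.2 (h l hl)
      · exact Finset.mem_univ _
  have hS : (F : Set I).PairwiseDisjoint S := by
    refine fun i hi j hj hij => Finset.disjoint_left.2 fun f hfi hfj => ?_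
    obtain ⟨b, rfl⟩ : ∃ b : ℕ → ι, (fun l : Fin m => b l) = f :=
      ⟨fun l => if h : l < m then f ⟨l, h⟩ else Classical.arbitrary ι, by simp⟩
    exact disjoint_left.1 (hdisj hi hj hij) ((hmem i hi b).1 hfi) ((hmem j hj b).1 hfj)
  have hb : (Fintype.card ι : ℝ) ≠ 0 := Nat.cast_ne_zero.2 Fintype.card_ne_zero
  have hcard : Fintype.card (Fin m → ι) ≤ (F.biUnion S).card := by
    rw [Finset.card_biUnion hS, Fintype.card_fun, Fintype.card_fin,
      Finset.sum_congr rfl fun i _ => card_words_with_prefix (w i)]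
    have hscale := mul_le_mul_of_nonneg_left hsum (pow_nonneg (Nat.cast_nonneg (Fintype.card ι)) m)
    rw [mul_one, Finset.mul_sum, Finset.sum_congr rfl fun i hi =>
      (by rw [inv_pow, ← pow_sub₀ _ hb (Finset.le_sup hi)] : _ =
        (Fintype.card ι : ℝ) ^ (m - d i))] at hscale
    exact_mod_cast hscale
  have huniv := Finset.eq_univ_of_card _ (le_antisymm (Finset.card_le_univ _) hcard)
  obtain ⟨i, hi, hai⟩ := Finset.mem_biUnion.1 (huniv ▸ Finset.mem_univ fun l : Fin m => a l)
  exact ⟨i, hi, (hmem i hi a).1 hai⟩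

theorem exists_cylinder_cover [Fintype ι] [Nonempty ι] (F : Finset I) (d : I → ℕ)
    (hsum : 1 ≤ ∑ i ∈ F, (Fintype.card ι : ℝ)⁻¹ ^ d i) :
    ∃ w : I → ℕ → ι, ∀ a, ∃ i ∈ F, a ∈ PiNat.cylinder (w i) (d i) := by
  obtain ⟨w, hcover | hdisj⟩ := exists_cylinders_cover_or_pairwiseDisjoint (ι := ι) d F
  · exact ⟨w, hcover⟩
  · exact ⟨w, cylinders_cover_of_pairwiseDisjoint hdisj hsum⟩

end Kraft

section Tree

/-- A node of the tree: a set of parameters in the Baire space whose image in `X` is used at scale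
`(1 / 2) ^ level`. -/
structure Node where
  carrier : Set (ℕ → ℕ)
  level : ℕ

/-- `q` is a finer node inside `p`, with the coordinates up to the level of `p` bounded. -/
structure IsChild (p q : Node) : Prop where
  carrier_subset : q.carrier ⊆ p.carrier
  level_lt : p.level < q.level
  exists_bound : ∃ N, ∀ y ∈ q.carrier, ∀ l ≤ p.level, y l ≤ N

variable {X ι : Type*} [MetricSpace X] {φ : (ℕ → ℕ) → X} {δ : ℝ}

/-- Children of `p` indexed by words: the child reads the letters of the word from the level of `p`
up to its own level, and two children either coincide, having read the same letters, or have
images separated at the scale of `p`. -/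
structure IsBranching (φ : (ℕ → ℕ) → X) (δ : ℝ) (p : Node) (child : (ℕ → ι) → Node) : Prop where
  isChild : ∀ a, IsChild p (child a)
  eq_or_le_dist : ∀ a a', (child a = child a' ∧
      ∀ l, p.level ≤ l → l < (child a).level → a l = a' l) ∨
    ∀ x ∈ φ '' (child a).carrier, ∀ y ∈ φ '' (child a').carrier, δ * (1 / 2) ^ p.level ≤ dist x y

lemma IsFrostmanContent.exists_mul_mass_le_truncation {s : ℝ} {c : ℝ≥0} {μ : OuterMeasure X}
    (hμ : IsFrostmanContent s c μ) (φ : (ℕ → ℕ) → X) (E : Set (ℕ → ℕ)) (n : ℕ) :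
    ∃ N, c * mass μ (φ '' E) ≤ mass μ (φ '' {y ∈ E | ∀ l ≤ n, y l ≤ N}) := by
  have hmono : Monotone fun N => φ '' {y ∈ E | ∀ l ≤ n, y l ≤ N} := fun N N' hN =>
    image_mono fun y hy => ⟨hy.1, fun l hl => (hy.2 l hl).trans hN⟩
  have hunion : ⋃ N, φ '' {y ∈ E | ∀ l ≤ n, y l ≤ N} = φ '' E := by
    rw [← image_iUnion]
    congr 1
    ext y
    simp only [mem_iUnion, mem_ofPred_eq, exists_and_left, and_iff_left_iff_imp]
    exact fun _ => ⟨(Finset.range (n + 1)).sup y, fun l hl =>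
      Finset.le_sup (Finset.mem_range.2 (Nat.lt_succ_of_le hl))⟩
  exact hunion ▸ hμ.exists_mul_mass_iUnion_le hmono

variable {μ : OuterMeasure X} {κ T : ℝ} {k n : ℕ} {P : Set X} {F : Finset ℕ} {Q : ℕ → Set X}
  {lev : ℕ → ℕ}

lemma IsRefinement.one_le_sum (h : IsRefinement μ κ T δ k n P F Q lev) :
    1 ≤ ∑ i ∈ F, ((2 ^ k : ℕ) : ℝ)⁻¹ ^ (lev i - n) := by
  have hpos : (0 : ℝ) < ((1 / 2) ^ n) ^ k := by positivity
  refine le_of_mul_le_mul_left ?_ hpos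
  rw [mul_one, Finset.mul_sum]
  refine h.le_sum.trans_eq (Finset.sum_congr rfl fun i hi => ?_)
  have hbase : ((2 ^ k : ℕ) : ℝ)⁻¹ = (1 / 2) ^ k := by simp
  rw [hbase, ← pow_mul, ← pow_mul, ← pow_mul, ← pow_add, mul_comm k, ← add_mul,
    Nat.add_sub_cancel' (h.lt_level i hi).le]

lemma IsRefinement.exists_isBranching [Fintype ι] [Nonempty ι] (hι : Fintype.card ι = 2 ^ k)
    {p : Node} {E : Set (ℕ → ℕ)} (hE : E ⊆ p.carrier) (hbdd : ∃ N, ∀ y ∈ E, ∀ l ≤ p.level, y l ≤ N)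
    (h : IsRefinement μ κ T δ k p.level (φ '' E) F Q lev) :
    ∃ child : (ℕ → ι) → Node, IsBranching φ δ p child ∧
      ∀ a, IsAdmissible μ κ T ((1 / 2) ^ (child a).level) (φ '' (child a).carrier) := by
  obtain ⟨w, hw⟩ := exists_cylinder_cover (ι := ι) F (fun i => lev i - p.level)
    (hι ▸ h.one_le_sum)
  choose idx hidx hmem using fun a : ℕ → ι => hw fun l => a (p.level + l)
  have himage : ∀ a, φ '' (E ∩ φ ⁻¹' Q (idx a)) = Q (idx a) := fun a => by
    rw [image_inter_preimage, inter_eq_right.2 (h.subset _ (hidx a))]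
  refine ⟨fun a => ⟨E ∩ φ ⁻¹' Q (idx a), lev (idx a)⟩, ⟨fun a => ⟨inter_subset_left.trans hE,
    h.lt_level _ (hidx a), ?_⟩, fun a a' => ?_⟩, fun a => ?_⟩
  · obtain ⟨N, hN⟩ := hbdd
    exact ⟨N, fun y hy => hN y hy.1⟩
  · simp only [himage]
    rcases lt_trichotomy (idx a) (idx a') with hlt | heq | hgt
    · exact Or.inr (h.le_dist _ (hidx a) _ (hidx a') hlt)
    · refine Or.inl ⟨by rw [heq], fun l hl hl' => ?_⟩
      obtain ⟨m, rfl⟩ := Nat.exists_eq_add_of_le hl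
      have hm : m < lev (idx a) - p.level := by omega
      exact (hmem a m hm).trans (heq ▸ (hmem a' m (heq ▸ hm)).symm)
    · refine Or.inr fun x hx y hy => ?_
      rw [dist_comm]
      exact h.le_dist _ (hidx a') _ (hidx a) hgt y hy x hx
  · simpa only [himage] using h.admissible _ (hidx a)

/-- The branch of the tree that follows the word `a` from the root. -/
def branch (child : Node → (ℕ → ι) → Node) (root : Node) (a : ℕ → ι) : ℕ → Node
  | 0 => root
  | i + 1 => child (branch child root a i) a

variable {V : Node → Prop} {child : Node → (ℕ → ι) → Node} {root : Node}

lemma branch_mem (hroot : V root) (hV : ∀ p, V p → ∀ a, V (child p a)) (a : ℕ → ι) (i : ℕ) :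
    V (branch child root a i) := by
  induction i with
  | zero => exact hroot
  | succ i ih => exact hV _ ih a

lemma nonempty_iInter_closure {E : ℕ → Set (ℕ → ℕ)} (hE : Antitone E) (hne : ∀ i, (E i).Nonempty)
    (hbdd : ∀ l, ∃ i N, ∀ y ∈ E i, y l ≤ N) : (⋂ i, closure (E i)).Nonempty := by
  choose y hy using hne
  have hev : ∀ i, ∀ᶠ j in (hyperfilter ℕ : Filter ℕ), y j ∈ E i := fun i =>
    ((eventually_ge_atTop i).filter_mono Nat.hyperfilter_le_atTop).mono fun j hj => hE hj (hy j)
  have hlim : ∀ l, ∃ z, Tendsto (fun j => y j l) (hyperfilter ℕ) (𝓝 z) := by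
    intro l
    obtain ⟨i, N, hN⟩ := hbdd l
    obtain ⟨z, -, hz⟩ := isCompact_iff_ultrafilter_le_nhds.1 (finite_Iic N).isCompact
      ((hyperfilter ℕ).map fun j => y j l)
      (le_principal_iff.2 ((hev i).mono fun j hj => hN _ hj))
    exact ⟨z, hz⟩
  choose z hz using hlim
  exact ⟨z, mem_iInter.2 fun i => mem_closure_of_tendsto (tendsto_pi_nhds.2 hz) (hev i)⟩

lemma exists_mem_closure_branch (hφ : Continuous φ) (hroot : V root)
    (hV : ∀ p, V p → ∀ a, V (child p a)) (hchild : ∀ p, V p → ∀ a, IsChild p (child p a))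
    (hne : ∀ p, V p → p.carrier.Nonempty) (a : ℕ → ι) :
    ∃ x, ∀ i, x ∈ closure (φ '' (branch child root a i).carrier) := by
  have hbranch := branch_mem hroot hV a
  have hlevel : StrictMono fun i => (branch child root a i).level :=
    strictMono_nat_of_lt_succ fun i => (hchild _ (hbranch i) a).level_lt
  obtain ⟨z, hz⟩ := nonempty_iInter_closure (E := fun i => (branch child root a i).carrier)
    (antitone_nat_of_succ_le fun i => (hchild _ (hbranch i) a).carrier_subset)
    (fun i => hne _ (hbranch i)) fun l => by
      obtain ⟨N, hN⟩ := (hchild _ (hbranch l) a).exists_bound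
      exact ⟨l + 1, N, fun y hy => hN y hy l (hlevel.le_apply)⟩
  exact ⟨φ z, fun i => image_closure_subset_closure_image hφ
    (mem_image_of_mem φ (mem_iInter.1 hz i))⟩

lemma le_dist_of_mem_closure_branch (hδ : 0 ≤ δ) (hroot : V root)
    (hV : ∀ p, V p → ∀ a, V (child p a)) (hbr : ∀ p, V p → IsBranching φ δ p (child p))
    {a a' : ℕ → ι} {x x' : X} (hx : ∀ i, x ∈ closure (φ '' (branch child root a i).carrier))
    (hx' : ∀ i, x' ∈ closure (φ '' (branch child root a' i).carrier)) {n : ℕ}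
    (hn : root.level ≤ n) (hne : a n ≠ a' n) : δ * (1 / 2) ^ n ≤ dist x x' := by
  by_contra! hlt
  have hagree : ∀ i, branch child root a i = branch child root a' i ∧
      i ≤ (branch child root a i).level ∧ (branch child root a i).level ≤ n := by
    intro i
    induction i with
    | zero => exact ⟨rfl, Nat.zero_le _, hn⟩
    | succ i ih =>
      obtain ⟨heq, hi, hin⟩ := ih
      have hbri := hbr _ (branch_mem hroot hV a i)
      have hlevel := (hbri.isChild a).level_lt
      rcases hbri.eq_or_le_dist a a' with ⟨hchild, hletters⟩ | hsep
      · refine ⟨by rw [branch, hchild, heq, branch], hi.trans_lt hlevel, ?_⟩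
        by_contra! hlast
        exact hne (hletters n hin hlast)
      · have hdist : δ * (1 / 2) ^ (branch child root a i).level ≤ dist x x' :=
          isClosed_Ici.closure_subset <| map_mem_closure₂ (f := dist) continuous_dist (hx (i + 1))
            (by simpa only [branch, ← heq] using hx' (i + 1)) hsep
        refine absurd (le_trans ?_ hdist) hlt.not_ge
        exact mul_le_mul_of_nonneg_left
          (pow_le_pow_of_le_one one_half_pos.le one_half_lt_one.le hin) hδ
  exact (hagree (n + 1)).2.1.not_gt (Nat.lt_succ_of_le (hagree (n + 1)).2.2)

/-- A family of points indexed by words in which the distance of two points is at least comparable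
to `(1 / 2) ^ n`, where `n` is the first place at which the words differ. -/
def IsTreeSeparated (x : (ℕ → ι) → X) : Prop :=
  ∃ c > 0, ∀ a a' n, a n ≠ a' n → c * (1 / 2) ^ n ≤ dist (x a) (x a')

lemma exists_isTreeSeparated_of_isBranching (hφ : Continuous φ) (hδ : 0 < δ) (hroot : V root)
    (hV : ∀ p, V p → ∀ a, V (child p a)) (hbr : ∀ p, V p → IsBranching φ δ p (child p))
    (hne : ∀ p, V p → p.carrier.Nonempty) : ∃ x : (ℕ → ι) → X, IsTreeSeparated x := by
  choose z hz using exists_mem_closure_branch hφ hroot hV (fun p hp => (hbr p hp).isChild) hne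
  refine ⟨fun a => z fun l => a (l - root.level), δ * (1 / 2) ^ root.level, by positivity,
    fun a a' n hn => ?_⟩
  rw [mul_assoc, ← pow_add, add_comm]
  exact le_dist_of_mem_closure_branch hδ.le hroot hV hbr (hz _) (hz _) (Nat.le_add_left _ _)
    (by simpa only [Nat.add_sub_cancel] using hn)

theorem exists_isTreeSeparated [SecondCountableTopology X] [Fintype ι] [Nonempty ι] {s : ℝ}
    {c : ℝ≥0} (hμ : IsFrostmanContent s c μ) (hk : 0 < k) (hks : k < s)
    (hι : Fintype.card ι = 2 ^ k) (hφ : Continuous φ) (hpos : μ (range φ) ≠ 0) :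
    ∃ x : (ℕ → ι) → X, IsTreeSeparated x := by
  obtain ⟨κ, T, δ, hκ, hδ, href⟩ := hμ.eventually_exists_isRefinement hk hks
  have hmass : 0 < mass μ (range φ) := (mass_pos_iff hμ.measure_univ_ne_top).2 hpos
  have hlim : Tendsto (fun n : ℕ => ((1 / 2 : ℝ) ^ n) ^ κ) atTop (𝓝 0) := by
    simpa only [Real.zero_rpow hκ.ne'] using (tendsto_pow_atTop_nhds_zero_of_lt_one
      one_half_pos.le one_half_lt_one).rpow_const (Or.inr hκ.le)
  obtain ⟨n₀, href, hmassive⟩ :=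
    ((eventually_forall_ge_atTop.2 href).and (hlim.eventually_le_const hmass)).exists
  let V (p : Node) : Prop :=
    n₀ ≤ p.level ∧ IsAdmissible μ κ T ((1 / 2) ^ p.level) (φ '' p.carrier)
  have hchild : ∀ p, ∃ child : (ℕ → ι) → Node, V p →
      IsBranching φ δ p child ∧ ∀ a, V (child a) := by
    intro p
    by_cases hp : V p
    · obtain ⟨N, hN⟩ := hμ.exists_mul_mass_le_truncation φ p.carrier p.level
      obtain ⟨F, Q, lev, hQ⟩ := href p.level hp.1 _ _ hp.2 (image_mono (sep_subset _ _)) hN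
      obtain ⟨child, hbr, hadm⟩ := hQ.exists_isBranching hι (sep_subset _ _) ⟨N, fun y hy => hy.2⟩
      exact ⟨child, fun _ => ⟨hbr, fun a => ⟨hp.1.trans (hbr.isChild a).level_lt.le, hadm a⟩⟩⟩
    · exact ⟨fun _ => p, fun h => absurd h hp⟩
  choose child hchild using hchild
  have hroot : V ⟨univ, n₀⟩ := by
    refine ⟨le_rfl, ?_, Or.inl ?_⟩ <;> simpa only [image_univ]
  refine exists_isTreeSeparated_of_isBranching hφ hδ hroot (fun p hp => (hchild p hp).2)
    (fun p hp => (hchild p hp).1) fun p hp => ?_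
  have hne : μ (φ '' p.carrier) ≠ 0 := (mass_pos_iff hμ.measure_univ_ne_top).1 hp.2.mass_pos
  exact nonempty_iff_ne_empty.2 fun h => hne (by rw [h, image_empty, measure_empty])

end Tree

section BinaryExpansion

variable {X I κ : Type*} [MetricSpace X]

/-- The point of the cube whose `i`-th coordinate has the binary digits `fun n => a n i`. -/
noncomputable def binaryPoint (a : ℕ → κ → Fin 2) (i : κ) : ℝ := Real.ofDigits fun n => a n i

lemma exists_binaryPoint_eq {v : κ → ℝ} (hv : v ∈ Icc 0 1) : ∃ a, binaryPoint a = v := by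
  choose d _ hd using fun i => Real.ofDigits_SurjOn one_lt_two ⟨hv.1 i, hv.2 i⟩
  exact ⟨fun n i => d i n, funext hd⟩

lemma dist_binaryPoint_le [Fintype κ] {a a' : ℕ → κ → Fin 2} {n : ℕ}
    (h : ∀ m < n, a m = a' m) : dist (binaryPoint a) (binaryPoint a') ≤ (1 / 2) ^ n := by
  refine (dist_pi_le_iff (by positivity)).2 fun i => ?_
  simpa [Real.dist_eq, binaryPoint] using
    Real.abs_ofDigits_sub_ofDigits_le fun m hm => congrFun (h m hm) i

lemma IsTreeSeparated.exists_dist_binaryPoint_le [Fintype κ] {x : (ℕ → κ → Fin 2) → X}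
    (hx : IsTreeSeparated x) :
    ∃ K : ℝ≥0, ∀ a a', dist (binaryPoint a) (binaryPoint a') ≤ K * dist (x a) (x a') := by
  obtain ⟨c, hc, hsep⟩ := hx
  refine ⟨⟨c⁻¹, (inv_pos.2 hc).le⟩, fun a a' => ?_⟩
  rcases eq_or_ne a a' with rfl | hne
  · simp
  · exact (dist_binaryPoint_le fun m hm => PiNat.apply_eq_of_lt_firstDiff hm).trans
      ((le_inv_mul_iff₀ hc).2 (hsep a a' _ (PiNat.apply_firstDiff_ne hne)))

lemma exists_lipschitzWith_comp_eq [Fintype κ] {x : I → X} {z : I → κ → ℝ} {K : ℝ≥0}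
    (h : ∀ a a', dist (z a) (z a') ≤ K * dist (x a) (x a')) :
    ∃ g : X → κ → ℝ, LipschitzWith K g ∧ ∀ a, g (x a) = z a := by
  have hfactor : z.FactorsThrough x := fun a a' haa' =>
    dist_le_zero.1 ((h a a').trans_eq (by rw [haa', dist_self, mul_zero]))
  have hLip : LipschitzOnWith K (Function.extend x z 0) (range x) := by
    refine LipschitzOnWith.of_dist_le_mul ?_
    rintro _ ⟨a, rfl⟩ _ ⟨a', rfl⟩
    simpa only [hfactor.extend_apply] using h a a'
  obtain ⟨g, hg, hgz⟩ := hLip.extend_pi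
  exact ⟨g, hg, fun a => (hgz (mem_range_self a)).symm.trans (hfactor.extend_apply 0 a)⟩

lemma lipschitzWith_clamp [Fintype κ] {g : X → κ → ℝ} {K : ℝ≥0} (hg : LipschitzWith K g) :
    LipschitzWith K fun y i => (projIcc (0 : ℝ) 1 zero_le_one (g y i) : ℝ) := by
  refine LipschitzWith.of_dist_le_mul fun y y' => (dist_pi_le_iff (by positivity)).2 fun i => ?_
  have h := (LipschitzWith.projIcc (zero_le_one (α := ℝ))).dist_le_mul (g y i) (g y' i)
  rw [NNReal.coe_one, one_mul] at h
  exact h.trans ((dist_le_pi_dist _ _ i).trans (hg.dist_le_mul y y'))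

theorem IsTreeSeparated.exists_lipschitzWith_image_eq_cube {k : ℕ}
    {x : (ℕ → Fin k → Fin 2) → X} (hx : IsTreeSeparated x) {A : Set X} (hA : range x ⊆ A) :
    ∃ f : X → EuclideanSpace ℝ (Fin k), (∃ L : ℝ≥0, LipschitzWith L f) ∧
      f '' A = {v : EuclideanSpace ℝ (Fin k) | ∀ i, v i ∈ Icc (0 : ℝ) 1} := by
  obtain ⟨K, hK⟩ := hx.exists_dist_binaryPoint_le
  obtain ⟨g, hg, hgx⟩ := exists_lipschitzWith_comp_eq hK
  refine ⟨_, ⟨_, (PiLp.lipschitzWith_toLp 2 fun _ : Fin k => ℝ).comp (lipschitzWith_clamp hg)⟩,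
    Subset.antisymm ?_ fun v hv => ?_⟩
  · rintro _ ⟨y, -, rfl⟩ i
    exact Subtype.prop _
  · obtain ⟨a, ha⟩ := exists_binaryPoint_eq (v := v.ofLp) ⟨fun i => (hv i).1, fun i => (hv i).2⟩
    refine ⟨x a, hA (mem_range_self a), ?_⟩
    ext i
    simp only [Function.comp_apply, hgx, ha, projIcc_of_mem zero_le_one (hv i)]

end BinaryExpansion

section Analytic

theorem exists_isTreeSeparated_of_lt_dimH {X ι : Type*} [MetricSpace X] [Fintype ι] [Nonempty ι]
    {k : ℕ} (hk : 0 < k) (hι : Fintype.card ι = 2 ^ k) {φ : (ℕ → ℕ) → X} (hφ : Continuous φ)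
    (hsurj : Function.Surjective φ) (hdim : (k : ℝ≥0∞) < dimH (univ : Set X)) :
    ∃ x : (ℕ → ι) → X, IsTreeSeparated x := by
  borelize X
  have : TopologicalSpace.SeparableSpace X := hsurj.denseRange.separableSpace hφ
  have : SecondCountableTopology X := UniformSpace.secondCountable_of_separable X
  obtain ⟨t, hkt, ht⟩ := ENNReal.lt_iff_exists_nnreal_btwn.1 hdim
  obtain ⟨s, hks, hst⟩ : ∃ s : ℝ, k < s ∧ s < t := exists_between (by exact_mod_cast hkt)
  have hH : μH[(t : ℝ)] (univ : Set X) ≠ 0 := by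
    rw [hausdorffMeasure_of_lt_dimH ht]
    exact ENNReal.top_ne_zero
  obtain ⟨c, μ, hμ, hpos⟩ := exists_isFrostmanContent
    (k.cast_nonneg.trans_lt hks) hst hH
  exact exists_isTreeSeparated hμ hk hks hι hφ (hsurj.range_eq ▸ hpos)

end Analytic

end LipschitzCube

theorem analytic_of_dimH_gt_mapsOnto_cube_general {X : Type*} [MetricSpace X] (A : Set X)
    (hA : MeasureTheory.AnalyticSet A) (k : ℕ) (hdim : (k : ℝ≥0∞) < dimH A) :
    ∃ f : X → EuclideanSpace ℝ (Fin k),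
      (∃ L : ℝ≥0, LipschitzWith L f) ∧
      f '' A = {x : EuclideanSpace ℝ (Fin k) | ∀ i, x i ∈ Set.Icc (0 : ℝ) 1} := by
  rw [AnalyticSet] at hA
  rcases hA with rfl | ⟨φ, hφ, rfl⟩
  · simp at hdim
  rcases k.eq_zero_or_pos with rfl | hk
  · exact ⟨0, ⟨0, LipschitzWith.const 0⟩, Set.Subset.antisymm (fun _ _ i => i.elim0)
      fun v _ => ⟨φ 0, Set.mem_range_self 0, Subsingleton.elim _ _⟩⟩
  have hdim' : (k : ℝ≥0∞) < dimH (Set.univ : Set (Set.range φ)) := by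
    rwa [← isometry_subtype_coe.dimH_image, Set.image_univ, Subtype.range_coe]
  obtain ⟨x, hx⟩ := LipschitzCube.exists_isTreeSeparated_of_lt_dimH (ι := Fin k → Fin 2) hk
    (by simp) (hφ.subtype_mk Set.mem_range_self) Set.rangeFactorization_surjective hdim'
  exact LipschitzCube.IsTreeSeparated.exists_lipschitzWith_image_eq_cube
    (x := fun a => (x a : X)) hx (Set.range_subset_iff.2 fun a => (x a).2)

/-- Let `A` be an analytic subset of a complete separable metric space `X` and
let `k` be a positive integer. If the Hausdorff dimension of `A` is strictly larger than `k`,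
then there exists a Lipschitz map `f : X → ℝ^k` with `f '' A = [0,1]^k`. -/
theorem analytic_of_dimH_gt_mapsOnto_cube
    {X : Type*} [MetricSpace X] [CompleteSpace X] [TopologicalSpace.SeparableSpace X]
    (A : Set X) (hA : MeasureTheory.AnalyticSet A)
    (k : ℕ) (hk : 0 < k)
    (hdim : (k : ℝ≥0∞) < dimH A) :
    ∃ f : X → EuclideanSpace ℝ (Fin k),
      (∃ L : ℝ≥0, LipschitzWith L f) ∧
      f '' A = {x : EuclideanSpace ℝ (Fin k) | ∀ i, x i ∈ Set.Icc (0 : ℝ) 1} :=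
  analytic_of_dimH_gt_mapsOnto_cube_general A hA k hdim
end
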